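/- arXiv:1507.05890 — 8 statements merged into one kernel-verified Lean document; each statement's English description precedes it below -/
import Mathlib

section
/- Let G be a connected finite simple graph of minimum degree at least two with cyclomatic number k, and let S be the set of vertices of G of degree at least three. If S is nonempty, then the number of connected components of the graph G − S (obtained by deleting the vertices of S and their incident edges) is at most k + |S| − 1. -/
/-!
A component of `G − S` sends edges only to itself and to `S`. Each edge inside a vertex set is
counted twice in the degree sum of that set, so if all degrees outside `S` are even, the number of
edges from a component to `S` is even; it is positive by connectedness, hence at least two. Summing
over the components, twice their number is at most the degree sum over `S`, which is at most
`2m - 2(n - |S|)` because every degree outside `S` is even and positive.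
-/

section DegreeParity

open Finset SimpleGraph

variable {V : Type*} (G : SimpleGraph V) [DecidableRel G.Adj]

theorem even_card_interedges_self (A : Finset V) : Even #(G.interedges A A) := by
  have h_edges : 2 * #(G.induce (A : Set V)).edgeFinset = #(G.interedges A A) := by
    rw [two_mul_card_edgeFinset,
      ← card_map ((Function.Embedding.subtype _).prodMap (Function.Embedding.subtype _))]
    congr 1
    ext ⟨v, w⟩
    simpa [mk_mem_interedges_iff] using and_rotate
  exact h_edges ▸ even_two_mul _

variable [Fintype V]

theorem card_interedges_univ (A : Finset V) :
    #(G.interedges A univ) = ∑ v ∈ A, G.degree v := by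
  classical
  simp only [interedges_def, card_filter, sum_product, ← card_neighborFinset_eq_degree,
    neighborFinset_eq_filter]

variable [DecidableEq V]

theorem card_interedges_self_add_card_interedges_compl (A : Finset V) :
    #(G.interedges A A) + #(G.interedges A Aᶜ) = ∑ v ∈ A, G.degree v := by
  rw [← card_interedges_univ, ← card_union_of_disjoint
    (interedges_disjoint_right G A disjoint_compl_right)]
  congr 1
  ext ⟨v, w⟩
  simp only [mem_union, mk_mem_interedges_iff, mem_compl, mem_univ]
  tauto

theorem even_card_interedges_compl_iff (A : Finset V) :
    Even #(G.interedges A Aᶜ) ↔ Even (∑ v ∈ A, G.degree v) := by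
  rw [← card_interedges_self_add_card_interedges_compl, Nat.even_add]
  simp only [even_card_interedges_self, true_iff]

end DegreeParity

section Components

open Finset SimpleGraph

variable {V : Type*} [Fintype V] {G : SimpleGraph V} {S : Finset V}

/-- The vertex set of a component of `G − S`, as a finite set of vertices of `G`, so that the edges
leaving it can be counted with `SimpleGraph.interedges`. -/
noncomputable def componentFinset (C : G.ComponentCompl S) : Finset V :=
  (C : Set V).toFinite.toFinset

theorem mem_componentFinset {C : G.ComponentCompl S} {v : V} :
    v ∈ componentFinset C ↔ v ∈ C :=
  Set.Finite.mem_toFinset _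

theorem pairwise_disjoint_componentFinset :
    Pairwise fun C D : G.ComponentCompl S => Disjoint (componentFinset C) (componentFinset D) :=
  fun _ _ hCD => Set.Finite.disjoint_toFinset.2 (ComponentCompl.pairwise_disjoint hCD)

variable [DecidableRel G.Adj]

theorem interedges_componentFinset_compl [DecidableEq V] (C : G.ComponentCompl S) :
    G.interedges (componentFinset C) (componentFinset C)ᶜ =
      G.interedges (componentFinset C) S := by
  ext ⟨v, w⟩
  simp only [mk_mem_interedges_iff, mem_compl, mem_componentFinset]
  refine and_congr_right fun hv => and_congr_left fun hvw => ⟨fun hw => ?_, fun hw hwC => ?_⟩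
  · by_contra hwS
    exact hw (ComponentCompl.mem_of_adj v w hv hwS hvw)
  · exact ComponentCompl.notMem_of_mem hwC hw

theorem two_le_card_interedges_componentFinset (hG : G.Preconnected) (hS : S.Nonempty)
    (heven : ∀ v ∉ S, Even (G.degree v)) (C : G.ComponentCompl S) :
    2 ≤ #(G.interedges (componentFinset C) S) := by
  classical
  have h_even : Even #(G.interedges (componentFinset C) S) := by
    rw [← interedges_componentFinset_compl, even_card_interedges_compl_iff]
    exact even_sum _ fun v hv =>
      heven v (ComponentCompl.notMem_of_mem (mem_componentFinset.1 hv))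
  have h_pos : 0 < #(G.interedges (componentFinset C) S) := by
    obtain ⟨⟨v, s⟩, hv, hs, hvs⟩ := C.exists_adj_boundary_pair hG hS
    exact card_pos.2 ⟨(v, s), (mk_mem_interedges_iff G).2 ⟨mem_componentFinset.2 hv, hs, hvs⟩⟩
  exact Nat.le_of_dvd h_pos h_even.two_dvd

theorem two_mul_card_componentCompl_le_sum_degree (hG : G.Preconnected) (hS : S.Nonempty)
    (heven : ∀ v ∉ S, Even (G.degree v)) :
    2 * Nat.card (G.ComponentCompl S) ≤ ∑ v ∈ S, G.degree v := by
  classical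
  have := G.symm
  calc
    2 * Nat.card (G.ComponentCompl S) = ∑ _C : G.ComponentCompl S, 2 := by
      simp [mul_comm]
    _ ≤ ∑ C : G.ComponentCompl S, #(G.interedges (componentFinset C) S) :=
      sum_le_sum fun C _ => two_le_card_interedges_componentFinset hG hS heven C
    _ = #(G.interedges (univ.biUnion componentFinset) S) := by
      rw [interedges_biUnion_left, card_biUnion]
      exact fun C _ D _ hCD =>
        interedges_disjoint_left G (pairwise_disjoint_componentFinset hCD) S
    _ ≤ #(G.interedges univ S) := card_le_card (interedges_mono G (subset_univ _) subset_rfl)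
    _ = #(G.interedges S univ) := Rel.card_interedges_comm _ _
    _ = ∑ v ∈ S, G.degree v := card_interedges_univ G S

theorem two_mul_card_compl_le_sum_degree [DecidableEq V] (hG : G.Preconnected) (hS : S.Nonempty)
    (heven : ∀ v ∉ S, Even (G.degree v)) :
    2 * #Sᶜ ≤ ∑ v ∈ Sᶜ, G.degree v := by
  rw [mul_comm, ← smul_eq_mul]
  refine card_nsmul_le_sum _ _ _ fun v hv => ?_
  obtain ⟨s, hs⟩ := hS
  have hvS : v ∉ S := mem_compl.1 hv
  have : Nontrivial V := ⟨v, s, fun hvs => hvS (hvs ▸ hs)⟩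
  exact Nat.le_of_dvd (hG.degree_pos_of_nontrivial v) (heven v hvS).two_dvd

end Components

theorem stmt_1_general {V : Type*} [Fintype V] (G : SimpleGraph V) [DecidableRel G.Adj]
    (hconn : G.Connected) (k : ℕ)
    (hk : G.edgeFinset.card = k + (Fintype.card V - 1)) {S : Set V} (hS : S.Nonempty)
    (heven : ∀ v ∉ S, Even (G.degree v)) :
    Nat.card (G.ComponentCompl S) ≤ k + S.ncard - 1 := by
  classical
  lift S to Finset V using S.toFinite
  rw [Set.ncard_coe_finset]
  have h_components := two_mul_card_componentCompl_le_sum_degree hconn.preconnected hS heven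
  have h_compl := two_mul_card_compl_le_sum_degree hconn.preconnected hS heven
  have h_handshake : ∑ v ∈ S, G.degree v + ∑ v ∈ Sᶜ, G.degree v = 2 * G.edgeFinset.card := by
    rw [Finset.sum_add_sum_compl, G.sum_degrees_eq_twice_card_edges]
  have h_card := S.card_add_card_compl
  have h_pos : 0 < S.card := Finset.card_pos.2 hS
  omega

/-- Let `G` be a connected finite simple graph of minimum degree at
least two with cyclomatic number `k` (i.e. `|E(G)| = k + (|V(G)| - 1)`), and let `S`
be the set of vertices of degree at least three.  If `S` is nonempty, then the number
of connected components of `G − S` (the induced subgraph on the vertices of degree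
less than three) is at most `k + |S| - 1`. -/
theorem stmt_1 {V : Type} [Fintype V] [DecidableEq V] (G : SimpleGraph V)
    [DecidableRel G.Adj] (hconn : G.Connected) (hdeg : ∀ v : V, 2 ≤ G.degree v)
    (k : ℕ) (hk : G.edgeFinset.card = k + (Fintype.card V - 1))
    (hS : {v : V | 3 ≤ G.degree v}.Nonempty) :
    Nat.card ((G.induce {v : V | ¬ 3 ≤ G.degree v}).ConnectedComponent) ≤
      k + ({v : V | 3 ≤ G.degree v} : Set V).ncard - 1 := by
  have heven (v : V) (hv : ¬ 3 ≤ G.degree v) : Even (G.degree v) :=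
    (show G.degree v = 2 from (Nat.le_of_not_lt hv).antisymm (hdeg v)) ▸ even_two
  exact stmt_1_general G hconn k hk hS heven
end

section
/- Let (G, z, P, b) be an instance of Hitting Paths in a Flower, let R_i be a petal and 1 ≤ ℓ ≤ |V(R_i)|, and let X_{i,ℓ} be the set produced by the canonical-solution process, assuming that step (1) does not apply and that the loop of step (2b) is never executed during the process. Partition the interval {r_{i,ℓ}, …, r_{i,max(X_{i,ℓ})}} into |X_{i,ℓ}| maximal subpaths that each end at a vertex of X_{i,ℓ} and contain no other vertices of X_{i,ℓ}. Then for every such subpath R' other than the singleton subpath {r_{i,ℓ}}, there is a path in P contained entirely within R'. -/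
/-!  Formalization of the "Hitting Paths in a Flower" setting.

A flower graph is a graph with a distinguished core vertex `z` such that every
connected component of `G − z` is a path (a *petal*) no interior vertex of which
is adjacent to `z`.  We represent (up to isomorphism) a flower with `n` petals,
petal `i` having `L i ≥ 1` vertices `r_{i,1}, …, r_{i,L i}`, by the vertex type
`Option (Fin n × ℕ)`: the core `z` is `none`, and `some (i, j)` (for `1 ≤ j ≤ L i`)
is the `j`-th vertex of petal `i`.  Booleans `al i` / `ar i` record whether the
left/right endpoint of petal `i` is adjacent to the core.  Since hitting a path
only depends on its vertex set, paths are recorded by their vertex sets; the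
predicate `IsFlowerPath` characterizes the vertex sets of simple paths of the
flower graph. -/

/-- Vertices of an `n`-petal flower: `none` is the core `z`,
`some (i, j)` is vertex `r_{i,j}` of petal `i`. -/
abbrev FVertex (n : ℕ) := Option (Fin n × ℕ)

/-- The core vertex `z`. -/
def fz {n : ℕ} : FVertex n := none

/-- The vertex `r_{i,j}` of petal `i`. -/
def fv {n : ℕ} (i : Fin n) (j : ℕ) : FVertex n := some (i, j)

/-- The set of vertices of petal `i` with indices in `s`. -/
def petalSeg {n : ℕ} (i : Fin n) (s : Finset ℕ) : Finset (FVertex n) :=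
  s.image (fun j => fv i j)

/-- Index sets of subpaths of petal `i` that can be attached to the core in a simple
path through `z`: the empty set, a prefix `{1, …, c}` whose left endpoint `r_{i,1}`
is adjacent to `z`, or a suffix `{c, …, L i}` whose right endpoint `r_{i,L i}` is
adjacent to `z`. -/
def IsZSeg {n : ℕ} (L : Fin n → ℕ) (al ar : Fin n → Bool) (i : Fin n)
    (s : Finset ℕ) : Prop :=
  s = ∅ ∨
  (al i = true ∧ ∃ c, 1 ≤ c ∧ c ≤ L i ∧ s = Finset.Icc 1 c) ∨
  (ar i = true ∧ ∃ c, 1 ≤ c ∧ c ≤ L i ∧ s = Finset.Icc c (L i))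

/-- `p` is the vertex set of a simple path in the flower graph: either an interval of
one petal, or the core `z` together with (at most) two core-attachable petal segments
which are disjoint if they lie in the same petal. -/
def IsFlowerPath {n : ℕ} (L : Fin n → ℕ) (al ar : Fin n → Bool)
    (p : Finset (FVertex n)) : Prop :=
  (∃ (i : Fin n) (a c : ℕ), 1 ≤ a ∧ a ≤ c ∧ c ≤ L i ∧ p = petalSeg i (Finset.Icc a c)) ∨
  (∃ (i₁ i₂ : Fin n) (s₁ s₂ : Finset ℕ), IsZSeg L al ar i₁ s₁ ∧ IsZSeg L al ar i₂ s₂ ∧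
    (i₁ = i₂ → Disjoint s₁ s₂) ∧ p = insert fz (petalSeg i₁ s₁ ∪ petalSeg i₂ s₂))

/-- An instance `(G, z, P, b)` of Hitting Paths in a Flower: a flower graph with `n`
petals of sizes `L i ≥ 1` (the Booleans `al`, `ar` telling which petal endpoints are
adjacent to the core), a finite set `P` of simple paths in the flower (given by their
vertex sets), and a budget function `b` with `b i ≥ 1`. -/
structure FlowerInstance (n : ℕ) where
  /-- number of vertices of petal `i` -/
  L : Fin n → ℕ
  hL : ∀ i, 1 ≤ L i
  /-- whether the left endpoint `r_{i,1}` of petal `i` is adjacent to the core -/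
  al : Fin n → Bool
  /-- whether the right endpoint `r_{i,L i}` of petal `i` is adjacent to the core -/
  ar : Fin n → Bool
  /-- the set of simple paths to be hit, given by their vertex sets -/
  P : Finset (Finset (FVertex n))
  hP : ∀ p ∈ P, IsFlowerPath L al ar p
  /-- the budget function -/
  b : Fin n → ℕ
  hb : ∀ i, 1 ≤ b i

/-- The (vertex set of) petal `R_i`. -/
def FlowerInstance.petal {n : ℕ} (F : FlowerInstance n) (i : Fin n) :
    Finset (FVertex n) :=
  petalSeg i (Finset.Icc 1 (F.L i))

/-- A solution: a set `X ⊆ V(G) ∖ {z}` that intersects every path of `P` and contains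
exactly `b i` vertices of petal `R_i`, for every `i`. -/
def FlowerInstance.IsSolution {n : ℕ} (F : FlowerInstance n)
    (X : Finset (FVertex n)) : Prop :=
  (∀ x ∈ X, ∃ (i : Fin n) (j : ℕ), 1 ≤ j ∧ j ≤ F.L i ∧ x = fv i j) ∧
  (∀ p ∈ F.P, (X ∩ p).Nonempty) ∧
  (∀ i : Fin n, (X ∩ F.petal i).card = F.b i)

/-- The pairs `(a, c)` with `1 ≤ a ≤ c ≤ L i` such that the interval
`{r_{i,a}, …, r_{i,c}}` of petal `i` is (the vertex set of) a path of `P`;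
these are exactly the paths of `P` contained entirely within petal `R_i`. -/
def FlowerInstance.innerIntervals {n : ℕ} (F : FlowerInstance n) (i : Fin n) :
    Finset (ℕ × ℕ) :=
  ((Finset.Icc 1 (F.L i)) ×ˢ (Finset.Icc 1 (F.L i))).filter
    (fun q => q.1 ≤ q.2 ∧ petalSeg i (Finset.Icc q.1 q.2) ∈ F.P)

/-- The intervals among `I` that are not intersected by `X`. -/
def unhit (I : Finset (ℕ × ℕ)) (X : Finset ℕ) : Finset (ℕ × ℕ) :=
  I.filter (fun q => ∀ j ∈ X, ¬ (q.1 ≤ j ∧ j ≤ q.2))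

/-- Step (2a) of the canonical-solution process: while some interval of `I` is not
intersected by `X`, add the minimum right endpoint of an unhit interval.  The fuel
argument only ensures termination; `I.card` iterations always suffice. -/
def greedyA (I : Finset (ℕ × ℕ)) : ℕ → Finset ℕ → Finset ℕ
  | 0, X => X
  | (fuel + 1), X =>
    if h : (unhit I X).Nonempty then
      greedyA I fuel (insert (((unhit I X).image Prod.snd).min' (h.image _)) X)
    else X

/-- Step (2b) of the canonical-solution process: while `|X| < bdg` and
`Y := Icc lo hi \ X` is nonempty, add the largest element of `Y`.  The fuel
argument only ensures termination; `bdg` iterations always suffice. -/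
def greedyB (lo hi bdg : ℕ) : ℕ → Finset ℕ → Finset ℕ
  | 0, X => X
  | (fuel + 1), X =>
    if h : X.card < bdg ∧ ((Finset.Icc lo hi) \ X).Nonempty then
      greedyB lo hi bdg fuel (insert (((Finset.Icc lo hi) \ X).max' h.2) X)
    else X

/-- The set `X_{i,ℓ}` produced by steps (2), (2a), (2b) of the canonical-solution
process for petal `R_i`, starting from `X_{i,ℓ} = {ℓ}`. -/
def FlowerInstance.canonicalAux {n : ℕ} (F : FlowerInstance n) (i : Fin n) (ℓ : ℕ) :
    Finset ℕ :=
  greedyB ℓ (F.L i) (F.b i) (F.b i)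
    (greedyA (F.innerIntervals i) (F.innerIntervals i).card {ℓ})

/-- The canonical `ℓ`-th solution for petal `R_i` (given by the indices of its
vertices on the petal), or `none` (NIL) if step (1) applies — some path of `P` is
contained within `{r_{i,1}, …, r_{i,ℓ-1}}` — or if the produced set does not have
exactly `b i` elements (step (2c)). -/
def FlowerInstance.canonical {n : ℕ} (F : FlowerInstance n) (i : Fin n) (ℓ : ℕ) :
    Option (Finset ℕ) :=
  if ∃ q ∈ F.innerIntervals i, q.2 < ℓ then none
  else if (F.canonicalAux i ℓ).card = F.b i then some (F.canonicalAux i ℓ) else none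

/-!
An interval `[a, c]` missed by `X` starts to the right of every element of `X` below `c`. Hence,
whenever step (2a) adds the right endpoint `c` of a missed interval, the gap of `X` ending at `c`
contains that interval. The set of missed intervals only shrinks, so the right endpoints are added
in increasing order, and no later one splits the gap.
-/

/-- The part of the line after the last element of `X` below `x`, up to and including `x`,
contains an interval of `I`. For `x ∈ X` other than the smallest element, this part is the subpath
ending at `x` in the partition induced by `X`; for the smallest element it is unbounded to the
left. A pair `(a, c)` encodes the interval `{a, …, c}`. -/
def GapContainsInterval (I : Finset (ℕ × ℕ)) (X : Finset ℕ) (x : ℕ) : Prop :=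
  ∃ q ∈ I, (∀ j ∈ X, j < x → j < q.1) ∧ q.2 ≤ x

section

variable {I : Finset (ℕ × ℕ)} {X : Finset ℕ}

theorem unhit_anti {Y : Finset ℕ} (hXY : X ⊆ Y) : unhit I Y ⊆ unhit I X :=
  Finset.monotone_filter_right I fun _ _ hY j hj => hY j (hXY hj)

theorem greedyA_induction {motive : Finset ℕ → Prop}
    (insert_endpoint : ∀ X, motive X → ∀ p ∈ unhit I X, (∀ q ∈ unhit I X, p.2 ≤ q.2) →
      motive (insert p.2 X))
    (fuel : ℕ) (hX : motive X) : motive (greedyA I fuel X) := by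
  induction fuel generalizing X with
  | zero => exact hX
  | succ fuel ih =>
    unfold greedyA
    split_ifs with h
    · obtain ⟨p, hp, hp_eq⟩ := Finset.mem_image.1 (Finset.min'_mem _ (h.image Prod.snd))
      rw [← hp_eq]
      refine ih (insert_endpoint X hX p hp fun q hq => ?_)
      exact hp_eq.trans_le (Finset.min'_le _ _ (Finset.mem_image_of_mem _ hq))
    · exact hX

theorem gapContainsInterval_of_mem_unhit {p : ℕ × ℕ} (hp : p ∈ unhit I X) :
    GapContainsInterval I X p.2 := by
  obtain ⟨hpI, hmiss⟩ := Finset.mem_filter.1 hp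
  exact ⟨p, hpI, fun j hj hjp => not_le.1 fun hpj => hmiss j hj ⟨hpj, hjp.le⟩, le_rfl⟩

theorem GapContainsInterval.insert_of_le {x m : ℕ} (h : GapContainsInterval I X x) (hxm : x ≤ m) :
    GapContainsInterval I (insert m X) x := by
  obtain ⟨q, hqI, hright, hqx⟩ := h
  refine ⟨q, hqI, fun j hj hjx => hright j ?_ hjx, hqx⟩
  exact Finset.mem_of_mem_insert_of_ne hj (hjx.trans_le hxm).ne

theorem stmt_3_general {fuel : ℕ} {S : Finset ℕ} {x : ℕ} (hx : x ∈ greedyA I fuel S)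
    (hxS : x ∉ S) : GapContainsInterval I (greedyA I fuel S) x := by
  suffices invariant : ∀ y ∈ greedyA I fuel S, y ∉ S →
      GapContainsInterval I (greedyA I fuel S) y ∧ ∀ q ∈ unhit I (greedyA I fuel S), y ≤ q.2 from
    (invariant x hx hxS).1
  refine greedyA_induction (motive := fun X => ∀ y ∈ X, y ∉ S →
    GapContainsInterval I X y ∧ ∀ q ∈ unhit I X, y ≤ q.2) ?_ fuel fun y hy hyS => absurd hy hyS
  intro X hX p hp hpmin y hy hyS
  obtain ⟨hgap, hle⟩ : GapContainsInterval I X y ∧ ∀ q ∈ unhit I X, y ≤ q.2 := by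
    rcases Finset.mem_insert.1 hy with rfl | hyX
    · exact ⟨gapContainsInterval_of_mem_unhit hp, hpmin⟩
    · exact hX y hyX hyS
  exact ⟨hgap.insert_of_le (hle p hp),
    fun q hq => hle q (unhit_anti (Finset.subset_insert _ _) hq)⟩

end

/-- **Observation 2.** Let `X = X_{i,ℓ}` result from the
canonical-solution process for petal `R_i`, assuming step (1) does not apply (no
path of `P` lies within `{r_{i,1}, …, r_{i,ℓ-1}}`) and the loop of step (2b) is
never executed (its guard fails for the set produced by step (2a)).  Partitioning
`{r_{i,ℓ}, …, r_{i,max X}}` into `|X|` maximal subpaths each ending at a vertex of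
`X` and containing no other vertex of `X`, every such subpath other than the
singleton `{r_{i,ℓ}}` entirely contains a path of `P`: for every `x ∈ X` with
`x ≠ ℓ` there is a target interval `(a, c) ∈ innerIntervals` lying strictly to the
right of every element of `X` below `x` and with `c ≤ x`. -/
theorem stmt_3 {n : ℕ} (F : FlowerInstance n) (i : Fin n) (ℓ : ℕ)
    (hℓ1 : 1 ≤ ℓ) (hℓ2 : ℓ ≤ F.L i)
    (hstep1 : ∀ q ∈ F.innerIntervals i, ¬ q.2 < ℓ)
    (X : Finset ℕ)
    (hX : X = greedyA (F.innerIntervals i) (F.innerIntervals i).card {ℓ})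
    (hstep2b : ¬ (X.card < F.b i ∧ ((Finset.Icc ℓ (F.L i)) \ X).Nonempty)) :
    ∀ x ∈ X, x ≠ ℓ →
      ∃ q ∈ F.innerIntervals i, (∀ j ∈ X, j < x → j < q.1) ∧ q.2 ≤ x := by
  subst hX
  exact fun x hx hxℓ => stmt_3_general hx (Finset.notMem_singleton.2 hxℓ)
end

section
/- Let (G, z, P, b) be an instance of Hitting Paths in a Flower, let R_i be a petal, and let Q = {r_{i,c}, …, r_{i,|V(R_i)|}} be a suffix of petal R_i. Then (a) a well-defined canonical ℓ-th solution X_{i,ℓ} for R_i intersects Q if and only if max(X_{i,ℓ}) ≥ c, and (b) if some well-defined canonical solution for R_i intersects Q, then there is an index ℓ* such that for every ℓ with a well-defined canonical ℓ-th solution X_{i,ℓ}, the set X_{i,ℓ} intersects Q if and only if ℓ ≥ ℓ*. -/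
/-! If no path of `P` ends before `ℓ`, step (2a) started from `{ℓ}` always leaves unhit exactly the
intervals lying to the right of the last chosen index (the frontier). Of two runs in lockstep, the
one started further right therefore stays further right and stops no later. If it ends with fewer
than `b i` indices, step (2b) adds the last vertex of the petal; otherwise both runs end with
exactly `b i` indices, step (2b) is idle, and the frontiers are the maxima. So the maximum of a
well-defined canonical `ℓ`-th solution is monotone in `ℓ`. -/

section FinsetMax

variable {α : Type*} [LinearOrder α]

theorem exists_mem_Icc_iff_le_max [LocallyFiniteOrder α] {X : Finset α} {c N : α}
    (hX : ∀ x ∈ X, x ≤ N) : (∃ j ∈ X, j ∈ Finset.Icc c N) ↔ (c : WithBot α) ≤ X.max := by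
  rw [Finset.max_eq_sup_coe, Finset.le_sup_iff (WithBot.bot_lt_coe c)]
  simp only [Finset.mem_Icc, WithBot.coe_le_coe]
  exact exists_congr fun j => and_congr_right fun hj => and_iff_left (hX j hj)

theorem card_lt_or_card_eq_and_max_le_of_subset {X X' Y : Finset α} (hXY : X ⊆ Y)
    (hcard : X'.card = X.card) (hmax : X.max ≤ X'.max) :
    X'.card < Y.card ∨ X'.card = Y.card ∧ Y.max ≤ X'.max := by
  obtain rfl | hlt := hXY.eq_or_ssubset
  · exact .inr ⟨hcard, hmax⟩
  · exact .inl (hcard.trans_lt (Finset.card_lt_card hlt))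

end FinsetMax

section GreedyA

variable {I : Finset (ℕ × ℕ)} {X X' : Finset ℕ} {m m' : ℕ}

/-- The index added to `X` by one iteration of step (2a): the smallest right endpoint of an
interval of `I` that `X` does not intersect. -/
def nextHit (I : Finset (ℕ × ℕ)) (X : Finset ℕ) (h : (unhit I X).Nonempty) : ℕ :=
  ((unhit I X).image Prod.snd).min' (h.image _)

theorem isLeast_nextHit (h : (unhit I X).Nonempty) :
    IsLeast (Prod.snd '' (unhit I X : Set (ℕ × ℕ))) (nextHit I X h) := by
  rw [← Finset.coe_image]
  exact Finset.isLeast_min' _ _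

theorem greedyA_succ_of_nonempty (k : ℕ) (h : (unhit I X).Nonempty) :
    greedyA I (k + 1) X = greedyA I k (insert (nextHit I X h) X) :=
  dif_pos h

theorem greedyA_succ_of_not_nonempty (k : ℕ) (h : ¬ (unhit I X).Nonempty) :
    greedyA I (k + 1) X = X :=
  dif_neg h

theorem subset_greedyA (I : Finset (ℕ × ℕ)) (fuel : ℕ) (X : Finset ℕ) :
    X ⊆ greedyA I fuel X := by
  induction fuel generalizing X with
  | zero => exact subset_rfl
  | succ k ih =>
    by_cases h : (unhit I X).Nonempty
    · rw [greedyA_succ_of_nonempty k h]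
      exact (Finset.subset_insert _ X).trans (ih _)
    · rw [greedyA_succ_of_not_nonempty k h]

theorem greedyA_subset (I : Finset (ℕ × ℕ)) (fuel : ℕ) (X : Finset ℕ) :
    greedyA I fuel X ⊆ X ∪ I.image Prod.snd := by
  induction fuel generalizing X with
  | zero => exact Finset.subset_union_left
  | succ k ih =>
    by_cases h : (unhit I X).Nonempty
    · obtain ⟨q, hq, hqe⟩ := (isLeast_nextHit h).1
      have hmem : nextHit I X h ∈ I.image Prod.snd :=
        Finset.mem_image.2 ⟨q, (Finset.mem_filter.1 hq).1, hqe⟩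
      rw [greedyA_succ_of_nonempty k h]
      refine (ih _).trans (Finset.union_subset ?_ Finset.subset_union_right)
      exact Finset.insert_subset (Finset.mem_union_right _ hmem) Finset.subset_union_left
    · rw [greedyA_succ_of_not_nonempty k h]
      exact Finset.subset_union_left

/-- `m` is the frontier of a partial run `X` of step (2a): it is the largest index chosen so far,
and the intervals still to be hit are exactly those starting to the right of `m`. -/
structure IsFrontier (I : Finset (ℕ × ℕ)) (X : Finset ℕ) (m : ℕ) : Prop where
  max_eq : X.max = m
  unhit_eq : unhit I X = {q ∈ I | m < q.1}

namespace IsFrontier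

theorem singleton (hm : ∀ q ∈ I, m ≤ q.2) : IsFrontier I {m} m where
  max_eq := Finset.max_singleton
  unhit_eq := by
    refine Finset.filter_congr fun q hq => ?_
    have := hm q hq
    simp only [Finset.mem_singleton, forall_eq]
    omega

theorem lt_nextHit (hX : IsFrontier I X m) (hI : ∀ q ∈ I, q.1 ≤ q.2)
    (h : (unhit I X).Nonempty) : m < nextHit I X h := by
  obtain ⟨q, hq, hqe⟩ := (isLeast_nextHit h).1
  rw [hX.unhit_eq] at hq
  obtain ⟨hqI, hmq⟩ := Finset.mem_filter.1 hq
  exact hqe ▸ hmq.trans_le (hI q hqI)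

theorem card_insert_nextHit (hX : IsFrontier I X m) (hI : ∀ q ∈ I, q.1 ≤ q.2)
    (h : (unhit I X).Nonempty) : (insert (nextHit I X h) X).card = X.card + 1 :=
  Finset.card_insert_of_notMem fun hmem =>
    (hX.lt_nextHit hI h).not_ge (Finset.le_max_of_eq hmem hX.max_eq)

theorem insert_nextHit (hX : IsFrontier I X m) (hI : ∀ q ∈ I, q.1 ≤ q.2)
    (h : (unhit I X).Nonempty) :
    IsFrontier I (insert (nextHit I X h) X) (nextHit I X h) where
  max_eq := by
    rw [Finset.max_insert, hX.max_eq]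
    exact max_eq_left (WithBot.coe_le_coe.2 (hX.lt_nextHit hI h).le)
  unhit_eq := by
    refine Finset.filter_congr fun q hq => ?_
    have hlt := hX.lt_nextHit hI h
    have hunhit : q ∈ unhit I X ↔ m < q.1 := by
      rw [hX.unhit_eq, Finset.mem_filter, and_iff_right hq]
    have hleast : q ∈ unhit I X → nextHit I X h ≤ q.2 := fun hqu =>
      (isLeast_nextHit h).2 ⟨q, hqu, rfl⟩
    have hmiss : (∀ j ∈ X, ¬ (q.1 ≤ j ∧ j ≤ q.2)) ↔ m < q.1 := by
      rw [← hunhit, unhit, Finset.mem_filter, and_iff_right hq]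
    rw [Finset.forall_mem_insert, hmiss]
    rw [hunhit] at hleast
    -- An interval missed by `X` cannot end before `nextHit`, so `nextHit` misses it only from
    -- the left.
    omega

theorem unhit_subset (hX : IsFrontier I X m) (hX' : IsFrontier I X' m') (hm : m ≤ m') :
    unhit I X' ⊆ unhit I X := by
  rw [hX.unhit_eq, hX'.unhit_eq]
  exact Finset.monotone_filter_right I fun _ _ hq => hm.trans_lt hq

theorem nextHit_le_nextHit (hX : IsFrontier I X m) (hX' : IsFrontier I X' m') (hm : m ≤ m')
    (h : (unhit I X).Nonempty) (h' : (unhit I X').Nonempty) :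
    nextHit I X h ≤ nextHit I X' h' :=
  (isLeast_nextHit h').mono (isLeast_nextHit h)
    (Set.image_mono (Finset.coe_subset.2 (hX.unhit_subset hX' hm)))

theorem card_greedyA_lt_or_card_eq_and_max_le (hX : IsFrontier I X m)
    (hX' : IsFrontier I X' m') (hm : m ≤ m') (hcard : X'.card = X.card)
    (hI : ∀ q ∈ I, q.1 ≤ q.2) (fuel : ℕ) :
    (greedyA I fuel X').card < (greedyA I fuel X).card ∨
      (greedyA I fuel X').card = (greedyA I fuel X).card ∧
        (greedyA I fuel X).max ≤ (greedyA I fuel X').max := by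
  have hmax : X.max ≤ X'.max := by
    rw [hX.max_eq, hX'.max_eq]
    exact WithBot.coe_le_coe.2 hm
  induction fuel generalizing X X' m m' with
  | zero => exact .inr ⟨hcard, hmax⟩
  | succ k ih =>
    by_cases h' : (unhit I X').Nonempty
    · have h : (unhit I X).Nonempty := h'.mono (hX.unhit_subset hX' hm)
      have hnext := hX.nextHit_le_nextHit hX' hm h h'
      have hfront := hX.insert_nextHit hI h
      have hfront' := hX'.insert_nextHit hI h'
      rw [greedyA_succ_of_nonempty k h, greedyA_succ_of_nonempty k h']
      refine ih hfront hfront' hnext ?_ ?_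
      · rw [hX.card_insert_nextHit hI h, hX'.card_insert_nextHit hI h', hcard]
      · rw [hfront.max_eq, hfront'.max_eq]
        exact WithBot.coe_le_coe.2 hnext
    · rw [greedyA_succ_of_not_nonempty k h']
      exact card_lt_or_card_eq_and_max_le_of_subset (subset_greedyA I (k + 1) X) hcard hmax

end IsFrontier

end GreedyA

section GreedyB

variable {lo hi bdg : ℕ} {X : Finset ℕ}

theorem subset_greedyB (lo hi bdg fuel : ℕ) (X : Finset ℕ) :
    X ⊆ greedyB lo hi bdg fuel X := by
  induction fuel generalizing X with
  | zero => exact subset_rfl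
  | succ k ih =>
    unfold greedyB
    split_ifs
    · exact (Finset.subset_insert _ X).trans (ih _)
    · exact subset_rfl

theorem greedyB_subset (lo hi bdg fuel : ℕ) (X : Finset ℕ) :
    greedyB lo hi bdg fuel X ⊆ X ∪ Finset.Icc lo hi := by
  induction fuel generalizing X with
  | zero => exact Finset.subset_union_left
  | succ k ih =>
    unfold greedyB
    split_ifs with h
    · have hmem := (Finset.mem_sdiff.1 (Finset.max'_mem _ h.2)).1
      refine (ih _).trans (Finset.union_subset ?_ Finset.subset_union_right)
      exact Finset.insert_subset (Finset.mem_union_right _ hmem) Finset.subset_union_left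
    · exact Finset.subset_union_left

theorem greedyB_eq_self (fuel : ℕ) (hX : bdg ≤ X.card) : greedyB lo hi bdg fuel X = X := by
  cases fuel with
  | zero => rfl
  | succ k => exact dif_neg fun h => h.1.not_ge hX

theorem right_mem_greedyB {fuel : ℕ} (hlo : lo ≤ hi) (hfuel : 1 ≤ fuel) (hX : X.card < bdg) :
    hi ∈ greedyB lo hi bdg fuel X := by
  by_cases hmem : hi ∈ X
  · exact subset_greedyB _ _ _ _ _ hmem
  have hhi : hi ∈ Finset.Icc lo hi \ X :=
    Finset.mem_sdiff.2 ⟨Finset.right_mem_Icc.2 hlo, hmem⟩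
  have hgreatest : IsGreatest (Finset.Icc lo hi \ X : Finset ℕ) hi :=
    ⟨hhi, fun x hx => (Finset.mem_Icc.1 (Finset.mem_sdiff.1 hx).1).2⟩
  obtain ⟨k, rfl⟩ := Nat.exists_eq_add_of_le' hfuel
  rw [greedyB, dif_pos ⟨hX, hi, hhi⟩,
    (Finset.isGreatest_max' _ ⟨hi, hhi⟩).unique hgreatest]
  exact subset_greedyB _ _ _ _ _ (Finset.mem_insert_self _ _)

end GreedyB

namespace FlowerInstance

variable {n : ℕ} {F : FlowerInstance n} {i : Fin n} {ℓ ℓ' : ℕ} {X X' : Finset ℕ}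

theorem fst_le_snd_of_mem_innerIntervals {q : ℕ × ℕ} (hq : q ∈ F.innerIntervals i) :
    q.1 ≤ q.2 :=
  (Finset.mem_filter.1 hq).2.1

theorem snd_le_of_mem_innerIntervals {q : ℕ × ℕ} (hq : q ∈ F.innerIntervals i) :
    q.2 ≤ F.L i :=
  (Finset.mem_Icc.1 (Finset.mem_product.1 (Finset.mem_filter.1 hq).1).2).2

theorem canonical_eq_some_iff :
    F.canonical i ℓ = some X ↔
      (∀ q ∈ F.innerIntervals i, ℓ ≤ q.2) ∧ F.canonicalAux i ℓ = X ∧ X.card = F.b i := by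
  simp only [canonical, Option.ite_none_left_eq_some, Option.ite_none_right_eq_some,
    Option.some.injEq, not_exists, not_and, not_lt]
  exact and_congr_right fun _ => ⟨fun ⟨hcard, hX⟩ => ⟨hX, hX ▸ hcard⟩,
    fun ⟨hX, hcard⟩ => ⟨hX ▸ hcard, hX⟩⟩

theorem canonicalAux_le (hℓ : ℓ ≤ F.L i) : ∀ x ∈ F.canonicalAux i ℓ, x ≤ F.L i := by
  intro x hx
  rcases Finset.mem_union.1 (greedyB_subset _ _ _ _ _ hx) with hA | hIcc
  · rcases Finset.mem_union.1 (greedyA_subset _ _ _ hA) with hstart | hend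
    · exact (Finset.mem_singleton.1 hstart).trans_le hℓ
    · obtain ⟨q, hq, rfl⟩ := Finset.mem_image.1 hend
      exact snd_le_of_mem_innerIntervals hq
  · exact (Finset.mem_Icc.1 hIcc).2

theorem le_of_canonical_eq_some (hℓ : ℓ ≤ F.L i) (hX : F.canonical i ℓ = some X) :
    ∀ x ∈ X, x ≤ F.L i := by
  obtain ⟨-, rfl, -⟩ := canonical_eq_some_iff.1 hX
  exact canonicalAux_le hℓ

theorem max_le_max_of_canonical_eq_some (hle : ℓ ≤ ℓ') (hℓ' : ℓ' ≤ F.L i)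
    (hX : F.canonical i ℓ = some X) (hX' : F.canonical i ℓ' = some X') : X.max ≤ X'.max := by
  have hXL : X.max ≤ F.L i := Finset.max_le fun x hx =>
    WithBot.coe_le_coe.2 (le_of_canonical_eq_some (hle.trans hℓ') hX x hx)
  obtain ⟨hstart, rfl, hcard⟩ := canonical_eq_some_iff.1 hX
  obtain ⟨hstart', rfl, -⟩ := canonical_eq_some_iff.1 hX'
  have hcompare := (IsFrontier.singleton hstart).card_greedyA_lt_or_card_eq_and_max_le
    (IsFrontier.singleton hstart') hle rfl (fun _ => fst_le_snd_of_mem_innerIntervals)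
    (F.innerIntervals i).card
  unfold canonicalAux at hXL hcard ⊢
  set A := greedyA (F.innerIntervals i) (F.innerIntervals i).card {ℓ}
  set A' := greedyA (F.innerIntervals i) (F.innerIntervals i).card {ℓ'}
  have hA : A.card ≤ F.b i := hcard ▸ Finset.card_le_card (subset_greedyB _ _ _ _ _)
  rcases lt_or_ge A'.card (F.b i) with hlt | hge
  · exact hXL.trans (Finset.le_max (right_mem_greedyB hℓ' (F.hb i) hlt))
  · obtain ⟨heq, hmax⟩ := hcompare.resolve_left (hA.trans hge).not_gt
    rwa [greedyB_eq_self _ (heq ▸ hge), greedyB_eq_self _ hge]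

end FlowerInstance

/-- **suffix case of Lemma `createliteral`.** Let
`Q = {r_{i,c}, …, r_{i,L i}}` be a suffix of petal `R_i`.  Then
(a) a well-defined canonical `ℓ`-th solution `X` for `R_i` intersects `Q` if and
only if `max X ≥ c`, and (b) if some well-defined canonical solution for `R_i`
intersects `Q`, then there is a threshold `ℓ*` such that a well-defined canonical
`ℓ`-th solution intersects `Q` if and only if `ℓ ≥ ℓ*`. -/
theorem stmt_8 {n : ℕ} (F : FlowerInstance n) (i : Fin n) (c : ℕ)
    (hc1 : 1 ≤ c) (hc2 : c ≤ F.L i) :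
    (∀ (ℓ : ℕ) (X : Finset ℕ), 1 ≤ ℓ → ℓ ≤ F.L i → F.canonical i ℓ = some X →
      ((∃ j ∈ X, j ∈ Finset.Icc c (F.L i)) ↔ (c : WithBot ℕ) ≤ X.max)) ∧
    ((∃ (ℓ : ℕ) (X : Finset ℕ), 1 ≤ ℓ ∧ ℓ ≤ F.L i ∧ F.canonical i ℓ = some X ∧
        ∃ j ∈ X, j ∈ Finset.Icc c (F.L i)) →
      ∃ ℓstar : ℕ,
        ∀ (ℓ : ℕ) (X : Finset ℕ), 1 ≤ ℓ → ℓ ≤ F.L i → F.canonical i ℓ = some X →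
          ((∃ j ∈ X, j ∈ Finset.Icc c (F.L i)) ↔ ℓstar ≤ ℓ)) := by
  have suffix_iff : ∀ (ℓ : ℕ) (X : Finset ℕ), ℓ ≤ F.L i → F.canonical i ℓ = some X →
      ((∃ j ∈ X, j ∈ Finset.Icc c (F.L i)) ↔ (c : WithBot ℕ) ≤ X.max) := fun _ _ hℓ hX =>
    exists_mem_Icc_iff_le_max (FlowerInstance.le_of_canonical_eq_some hℓ hX)
  refine ⟨fun ℓ X _ => suffix_iff ℓ X, fun hex => ?_⟩
  classical
  obtain ⟨X₀, -, hℓ₀, hX₀, hhit₀⟩ := Nat.find_spec hex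
  refine ⟨Nat.find hex, fun ℓ X hℓ1 hℓ hX =>
    ⟨fun hhit => Nat.find_min' hex ⟨X, hℓ1, hℓ, hX, hhit⟩, fun hle => ?_⟩⟩
  rw [suffix_iff _ X hℓ hX]
  rw [suffix_iff _ X₀ hℓ₀ hX₀] at hhit₀
  exact hhit₀.trans (FlowerInstance.max_le_max_of_canonical_eq_some hle hℓ hX₀ hX)
end

section
/- Let G be a finite simple graph, let P be a set of simple paths in G, let t be an integer, and let v be a vertex of G of degree at most one. (1) If the singleton path {v} belongs to P, then there is a set of at most t vertices of G intersecting every path in P if and only if there is a set of at most t − 1 vertices of G − v intersecting every path in P that does not contain v. (2) If the singleton path {v} does not belong to P, then there is a set of at most t vertices of G intersecting every path in P if and only if there is a set of at most t vertices of G − v intersecting, for every path Q in P, the path Q with the vertex v removed. -/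
/-!
If the trivial path at `v` lies in `P`, then `v` belongs to every hitting set, and removing it
leaves a set that hits the paths avoiding `v`. Otherwise every path through `v` also visits a
neighbour of `v`, so in a hitting set `v` can be exchanged for its at most one neighbour.
-/

section HittingSet

variable {ι α : Type*} {I : Set ι} {S T : ι → Set α} {X N : Finset α} {a : α} {i : ι}

/-- `X` is a hitting set of the family of sets `S i`, `i ∈ I`: it meets each of them.
The family is indexed so that it can be a set of walks, `S` sending a walk to its vertices. -/
def IsHittingSet (I : Set ι) (S : ι → Set α) (X : Finset α) : Prop :=
  ∀ i ∈ I, ∃ x ∈ X, x ∈ S i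

theorem IsHittingSet.mono (hX : IsHittingSet I S X) (hST : ∀ i ∈ I, S i ⊆ T i) :
    IsHittingSet I T X :=
  fun i hi ↦ (hX i hi).imp fun _ ⟨hxX, hx⟩ ↦ ⟨hxX, hST i hi hx⟩

theorem IsHittingSet.mem_of_eq_singleton (hX : IsHittingSet I S X) (hi : i ∈ I)
    (hS : S i = {a}) : a ∈ X := by
  simpa [hS] using hX i hi

section DecidableEq

variable [DecidableEq α]

theorem isHittingSet_insert_iff :
    IsHittingSet I S (insert a X) ↔ IsHittingSet {i ∈ I | a ∉ S i} S X := by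
  simp only [IsHittingSet, Finset.exists_mem_insert, Set.mem_ofPred_eq, and_imp,
    or_iff_not_imp_left]

theorem isHittingSet_erase_iff :
    IsHittingSet I S (X.erase a) ↔ IsHittingSet I (fun i ↦ S i \ {a}) X := by
  simp only [IsHittingSet, Finset.mem_erase, Set.mem_sdiff, Set.mem_singleton_iff,
    and_assoc, and_left_comm, and_comm]

theorem IsHittingSet.erase (hX : IsHittingSet I S X) :
    IsHittingSet {i ∈ I | a ∉ S i} S (X.erase a) := by
  rintro i ⟨hi, ha⟩
  obtain ⟨x, hxX, hx⟩ := hX i hi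
  exact ⟨x, Finset.mem_erase.mpr ⟨ne_of_mem_of_not_mem hx ha, hxX⟩, hx⟩

theorem IsHittingSet.union_sdiff_singleton (hX : IsHittingSet {i ∈ I | a ∉ S i} S X)
    (hN : IsHittingSet {i ∈ I | a ∈ S i} (fun i ↦ S i \ {a}) N) :
    IsHittingSet I (fun i ↦ S i \ {a}) (X ∪ N) := by
  intro i hi
  by_cases ha : a ∈ S i
  · obtain ⟨x, hxN, hx⟩ := hN i ⟨hi, ha⟩
    exact ⟨x, Finset.mem_union_right X hxN, hx⟩
  · obtain ⟨x, hxX, hx⟩ := hX i ⟨hi, ha⟩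
    exact ⟨x, Finset.mem_union_left N hxX, hx, ne_of_mem_of_not_mem hx ha⟩

end DecidableEq

theorem IsHittingSet.exists_notMem_sdiff_singleton (hX : IsHittingSet I S X) (hN : N.card ≤ 1)
    (hNS : IsHittingSet {i ∈ I | a ∈ S i} (fun i ↦ S i \ {a}) N) :
    ∃ Y : Finset α, Y.card ≤ X.card ∧ a ∉ Y ∧ IsHittingSet I (fun i ↦ S i \ {a}) Y := by
  classical
  by_cases ha : a ∈ X
  · refine ⟨(X.erase a ∪ N).erase a, ?_, Finset.notMem_erase a _, ?_⟩
    · calc ((X.erase a ∪ N).erase a).card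
          ≤ (X.erase a ∪ N).card := Finset.card_erase_le
        _ ≤ (X.erase a).card + N.card := Finset.card_union_le _ _
        _ ≤ (X.erase a).card + 1 := by gcongr
        _ = X.card := Finset.card_erase_add_one ha
    · rw [← isHittingSet_erase_iff, Finset.erase_idem, isHittingSet_erase_iff]
      exact hX.erase.union_sdiff_singleton hNS
  · refine ⟨X, le_rfl, ha, ?_⟩
    rwa [← isHittingSet_erase_iff, Finset.erase_eq_of_notMem ha]

theorem exists_card_le_isHittingSet_iff_of_eq_singleton (hi : i ∈ I) (hS : S i = {a}) (t : ℤ) :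
    (∃ X : Finset α, (X.card : ℤ) ≤ t ∧ IsHittingSet I S X) ↔
      ∃ X : Finset α, (X.card : ℤ) ≤ t - 1 ∧ a ∉ X ∧ IsHittingSet {i ∈ I | a ∉ S i} S X := by
  classical
  constructor
  · rintro ⟨X, hXt, hX⟩
    have ha : a ∈ X := hX.mem_of_eq_singleton hi hS
    refine ⟨X.erase a, ?_, Finset.notMem_erase a X, hX.erase⟩
    have := Finset.card_erase_add_one ha
    lia
  · rintro ⟨X, hXt, ha, hX⟩
    refine ⟨insert a X, ?_, isHittingSet_insert_iff.mpr hX⟩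
    rw [Finset.card_insert_of_notMem ha]
    lia

theorem exists_card_le_isHittingSet_iff_sdiff_singleton (hN : N.card ≤ 1)
    (hNS : IsHittingSet {i ∈ I | a ∈ S i} (fun i ↦ S i \ {a}) N) (t : ℤ) :
    (∃ X : Finset α, (X.card : ℤ) ≤ t ∧ IsHittingSet I S X) ↔
      ∃ X : Finset α, (X.card : ℤ) ≤ t ∧ a ∉ X ∧ IsHittingSet I (fun i ↦ S i \ {a}) X := by
  constructor
  · rintro ⟨X, hXt, hX⟩
    obtain ⟨Y, hYX, ha, hY⟩ := hX.exists_notMem_sdiff_singleton hN hNS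
    exact ⟨Y, (Int.ofNat_le.mpr hYX).trans hXt, ha, hY⟩
  · rintro ⟨X, hXt, -, hX⟩
    exact ⟨X, hXt, hX.mono fun _ _ ↦ Set.sdiff_subset⟩

end HittingSet

section Walk

open SimpleGraph

variable {V : Type*} {G : SimpleGraph V}

theorem sigma_eq_nil_of_nil_of_mem_support {u w v : V} {p : G.Walk u w} (hp : p.Nil)
    (hv : v ∈ p.support) : (⟨u, w, p⟩ : Σ u w : V, G.Walk u w) = ⟨v, v, Walk.nil⟩ := by
  cases hp
  rw [Walk.mem_support_nil_iff.mp hv]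

theorem isHittingSet_neighborFinset {P : Set (Σ u w : V, G.Walk u w)} {v : V}
    [Fintype (G.neighborSet v)]
    (hP : (⟨v, v, Walk.nil⟩ : Σ u w : V, G.Walk u w) ∉ P) :
    IsHittingSet {p ∈ P | v ∈ p.2.2.support} (fun p ↦ {x | x ∈ p.2.2.support} \ {v})
      (G.neighborFinset v) := by
  rintro ⟨u, w, p⟩ ⟨hp, hv⟩
  have hnil : ¬ p.Nil := fun h ↦ hP (sigma_eq_nil_of_nil_of_mem_support h hv ▸ hp)
  obtain ⟨x, hx, hvx⟩ := adj_of_mem_walk_support p hnil hv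
  exact ⟨x, (G.mem_neighborFinset v x).mpr hvx, hx, hvx.ne'⟩

end Walk

theorem stmt_10_general {V : Type*} (G : SimpleGraph V) (P : Set (Σ u v : V, G.Walk u v))
    (t : ℤ) (v : V) [Fintype (G.neighborSet v)] (hv : G.degree v ≤ 1) :
    ((⟨v, v, SimpleGraph.Walk.nil⟩ : Σ u v : V, G.Walk u v) ∈ P →
      ((∃ X : Finset V, (X.card : ℤ) ≤ t ∧
          ∀ p ∈ P, ∃ x ∈ X, x ∈ p.2.2.support) ↔
        (∃ X : Finset V, (X.card : ℤ) ≤ t - 1 ∧ v ∉ X ∧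
          ∀ p ∈ P, v ∉ p.2.2.support → ∃ x ∈ X, x ∈ p.2.2.support))) ∧
    ((⟨v, v, SimpleGraph.Walk.nil⟩ : Σ u v : V, G.Walk u v) ∉ P →
      ((∃ X : Finset V, (X.card : ℤ) ≤ t ∧
          ∀ p ∈ P, ∃ x ∈ X, x ∈ p.2.2.support) ↔
        (∃ X : Finset V, (X.card : ℤ) ≤ t ∧ v ∉ X ∧
          ∀ p ∈ P, ∃ x ∈ X, x ∈ p.2.2.support ∧ x ≠ v))) := by
  let vertices (p : Σ u v : V, G.Walk u v) : Set V := {x | x ∈ p.2.2.support}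
  refine ⟨fun hmem ↦ ?_, fun hnotMem ↦ ?_⟩
  · have hsingleton : vertices ⟨v, v, SimpleGraph.Walk.nil⟩ = {v} :=
      Set.ext fun _ ↦ SimpleGraph.Walk.mem_support_nil_iff
    simpa only [IsHittingSet, Set.mem_ofPred_eq, and_imp, vertices] using
      exists_card_le_isHittingSet_iff_of_eq_singleton hmem hsingleton t
  · exact exists_card_le_isHittingSet_iff_sdiff_singleton hv (isHittingSet_neighborFinset hnotMem) t

/-- Let `G` be a finite simple graph, `P` a set of simple paths in
`G`, `t` an integer, and `v` a vertex of degree at most one.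
(1) If the singleton path `{v}` belongs to `P`, then there is a set of at most `t`
vertices of `G` intersecting every path of `P` iff there is a set of at most `t - 1`
vertices of `G − v` intersecting every path of `P` that does not contain `v`.
(2) If the singleton path `{v}` does not belong to `P`, then there is a set of at
most `t` vertices of `G` intersecting every path of `P` iff there is a set of at
most `t` vertices of `G − v` intersecting, for every path `Q ∈ P`, the path `Q`
with the vertex `v` removed (i.e. meeting `Q` in a vertex other than `v`). -/
theorem stmt_10 {V : Type} [Fintype V] [DecidableEq V] (G : SimpleGraph V)
    [DecidableRel G.Adj]
    (P : Set (Σ u v : V, G.Walk u v)) (hP : ∀ p ∈ P, p.2.2.IsPath)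
    (t : ℤ) (v : V) (hv : G.degree v ≤ 1) :
    ((⟨v, v, SimpleGraph.Walk.nil⟩ : Σ u v : V, G.Walk u v) ∈ P →
      ((∃ X : Finset V, (X.card : ℤ) ≤ t ∧
          ∀ p ∈ P, ∃ x ∈ X, x ∈ p.2.2.support) ↔
        (∃ X : Finset V, (X.card : ℤ) ≤ t - 1 ∧ v ∉ X ∧
          ∀ p ∈ P, v ∉ p.2.2.support → ∃ x ∈ X, x ∈ p.2.2.support))) ∧
    ((⟨v, v, SimpleGraph.Walk.nil⟩ : Σ u v : V, G.Walk u v) ∉ P →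
      ((∃ X : Finset V, (X.card : ℤ) ≤ t ∧
          ∀ p ∈ P, ∃ x ∈ X, x ∈ p.2.2.support) ↔
        (∃ X : Finset V, (X.card : ℤ) ≤ t ∧ v ∉ X ∧
          ∀ p ∈ P, ∃ x ∈ X, x ∈ p.2.2.support ∧ x ≠ v))) :=
  stmt_10_general G P t v hv
end

section
/- Let φ be a totally ordered regular signed 3-CNF formula over variables x_1, …, x_n with truth value set [N], containing no trivially satisfied clause (i.e., no clause that contains literals x_i ≤ c_1 and x_i ≥ c_2 on the same variable with c_2 ≤ c_1 + 1). Build the flower graph G with core z and petals R_1, …, R_n, where each petal R_i is a path on N vertices r_{i,1}, …, r_{i,N} whose both endpoints are adjacent to z. Let S be the collection of subgraphs of G consisting of: for each clause C of φ, the subgraph S_C induced by z together with the vertices of the prefixes {r_{i,1}, …, r_{i,c}} for the literals x_i ≤ c of C and of the suffixes {r_{i,c}, …, r_{i,N}} for the literals x_i ≥ c of C; and, for each i ∈ [n], the path R_i. Then there is a set of at most n vertices of G intersecting every subgraph in S if and only if φ is satisfiable. -/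
/-!  Totally ordered regular signed CNF formulas.  A literal over variables
`Fin n` is a triple `(i, pol, c)` meaning `x_i ≥ c` when `pol = true` and
`x_i ≤ c` when `pol = false`; a clause is a list of literals and a formula a
list of clauses.  An assignment gives every variable a value in `[N]`. -/

/-- A signed literal `(i, pol, c)`: `x_i ≥ c` if `pol = true`, else `x_i ≤ c`. -/
abbrev SLit (n : ℕ) := Fin n × Bool × ℕ

/-- Satisfaction of a signed literal under an assignment `f`. -/
def slitSat {n : ℕ} (f : Fin n → ℕ) (l : SLit n) : Prop :=
  if l.2.1 then l.2.2 ≤ f l.1 else f l.1 ≤ l.2.2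

/-- The signed CNF formula `φ` is satisfiable over the truth value set `[N]`:
some assignment with values in `{1, …, N}` makes every clause contain a true
literal. -/
def SSat {n : ℕ} (N : ℕ) (φ : List (List (SLit n))) : Prop :=
  ∃ f : Fin n → ℕ, (∀ i, 1 ≤ f i ∧ f i ≤ N) ∧ ∀ C ∈ φ, ∃ l ∈ C, slitSat f l

/-- The petal segment associated to a literal: the prefix `{r_{i,1}, …, r_{i,c}}`
for a literal `x_i ≤ c` and the suffix `{r_{i,c}, …, r_{i,N}}` for `x_i ≥ c`. -/
def litSeg {n : ℕ} (N : ℕ) (l : SLit n) : Finset (FVertex n) :=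
  if l.2.1 then petalSeg l.1 (Finset.Icc l.2.2 N) else petalSeg l.1 (Finset.Icc 1 l.2.2)

/-- The (vertex set of the) subgraph `S_C` associated to a clause `C`: the core `z`
together with the petal segments of the literals of `C`. -/
def clauseSubgraph {n : ℕ} (N : ℕ) (C : List (SLit n)) : Finset (FVertex n) :=
  insert fz (C.foldr (fun l acc => litSeg N l ∪ acc) ∅)

/-!
The petals are `n` pairwise disjoint sets, so a set of at most `n` vertices that meets all of them
consists of exactly one vertex `r_{i, f i}` per petal, with no vertex left over for the core.
Such a set is the same thing as an assignment `f`, and `r_{i, f i}` lies on the prefix or suffix of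
a literal on `x_i` exactly when `f` makes that literal true.
-/

theorem exists_image_eq_of_card_le_of_pairwise_disjoint {ι α : Type*} [Fintype ι] [DecidableEq α]
    {P : ι → Finset α} (hP : Pairwise fun i j => Disjoint (P i) (P j)) {X : Finset α}
    (hcard : X.card ≤ Fintype.card ι) (hX : ∀ i, (X ∩ P i).Nonempty) :
    ∃ g : ι → α, (∀ i, g i ∈ P i) ∧ Finset.univ.image g = X := by
  choose g hg using hX
  have hgX (i : ι) : g i ∈ X := Finset.mem_of_mem_inter_left (hg i)
  have hgP (i : ι) : g i ∈ P i := Finset.mem_of_mem_inter_right (hg i)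
  have hinj : Function.Injective g := fun i j hij => by
    by_contra hne
    exact Finset.disjoint_left.1 (hP hne) (hgP i) (hij ▸ hgP j)
  refine ⟨g, hgP, Finset.eq_of_subset_of_card_le (Finset.image_subset_iff.2 fun i _ => hgX i) ?_⟩
  rwa [Finset.card_image_of_injective _ hinj, Finset.card_univ]

section FlowerGraph

variable {n N : ℕ} {f : Fin n → ℕ} {s : Finset ℕ}

theorem fv_inj {i k : Fin n} {j m : ℕ} : fv i j = fv k m ↔ i = k ∧ j = m := by
  simp only [fv, Option.some.injEq, Prod.mk.injEq]

theorem mem_petalSeg {i : Fin n} {x : FVertex n} : x ∈ petalSeg i s ↔ ∃ j ∈ s, fv i j = x :=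
  Finset.mem_image

theorem pairwise_disjoint_petalSeg (s : Finset ℕ) :
    Pairwise fun i k : Fin n => Disjoint (petalSeg i s) (petalSeg k s) := by
  refine fun i k hik => Finset.disjoint_left.2 fun x hi hk => hik ?_
  obtain ⟨j, -, rfl⟩ := mem_petalSeg.1 hi
  obtain ⟨m, -, hm⟩ := mem_petalSeg.1 hk
  exact (fv_inj.1 hm).1.symm

theorem clauseSubgraph_eq_insert_biUnion (N : ℕ) (C : List (SLit n)) :
    clauseSubgraph N C = insert fz (C.toFinset.biUnion (litSeg N)) := by
  rw [clauseSubgraph]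
  congr 1
  induction C with
  | nil => rfl
  | cons l C ih => rw [List.foldr_cons, ih, List.toFinset_cons, Finset.biUnion_insert]

/-- The vertex set `{r_{1, f 1}, …, r_{n, f n}}` encoding the assignment `f`. -/
def petalTransversal (f : Fin n → ℕ) : Finset (FVertex n) :=
  Finset.univ.image fun i => fv i (f i)

theorem mem_petalTransversal {x : FVertex n} : x ∈ petalTransversal f ↔ ∃ i, fv i (f i) = x := by
  simp only [petalTransversal, Finset.mem_image, Finset.mem_univ, true_and]

theorem card_petalTransversal (f : Fin n → ℕ) : (petalTransversal f).card = n := by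
  have hinj : Function.Injective fun i => fv i (f i) := fun _ _ h => (fv_inj.1 h).1
  rw [petalTransversal, Finset.card_image_of_injective _ hinj, Finset.card_univ, Fintype.card_fin]

theorem fz_notMem_petalTransversal (f : Fin n → ℕ) : fz ∉ petalTransversal f := fun h => by
  obtain ⟨i, hi⟩ := mem_petalTransversal.1 h
  exact Option.some_ne_none _ hi

theorem petalTransversal_inter_petalSeg_nonempty_iff {i : Fin n} :
    (petalTransversal f ∩ petalSeg i s).Nonempty ↔ f i ∈ s := by
  constructor
  · rintro ⟨x, hx⟩
    obtain ⟨hxf, hxs⟩ := Finset.mem_inter.1 hx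
    obtain ⟨k, rfl⟩ := mem_petalTransversal.1 hxf
    obtain ⟨j, hj, hjk⟩ := mem_petalSeg.1 hxs
    obtain ⟨rfl, rfl⟩ := fv_inj.1 hjk
    exact hj
  · exact fun hi => ⟨fv i (f i), Finset.mem_inter.2
      ⟨mem_petalTransversal.2 ⟨i, rfl⟩, mem_petalSeg.2 ⟨f i, hi, rfl⟩⟩⟩

theorem petalTransversal_inter_litSeg_nonempty_iff {l : SLit n} (hl : f l.1 ∈ Finset.Icc 1 N) :
    (petalTransversal f ∩ litSeg N l).Nonempty ↔ slitSat f l := by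
  obtain ⟨h_one_le, h_le⟩ := Finset.mem_Icc.1 hl
  unfold litSeg slitSat
  split_ifs
  · rw [petalTransversal_inter_petalSeg_nonempty_iff, Finset.mem_Icc, and_iff_left h_le]
  · rw [petalTransversal_inter_petalSeg_nonempty_iff, Finset.mem_Icc, and_iff_right h_one_le]

theorem petalTransversal_inter_clauseSubgraph_nonempty_iff {C : List (SLit n)}
    (hf : ∀ i, f i ∈ Finset.Icc 1 N) :
    (petalTransversal f ∩ clauseSubgraph N C).Nonempty ↔ ∃ l ∈ C, slitSat f l := by
  rw [clauseSubgraph_eq_insert_biUnion,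
    Finset.inter_insert_of_notMem (fz_notMem_petalTransversal f), Finset.inter_biUnion,
    Finset.biUnion_nonempty]
  simp only [List.mem_toFinset, petalTransversal_inter_litSeg_nonempty_iff (hf _)]

theorem exists_petalTransversal_eq {X : Finset (FVertex n)} (hcard : X.card ≤ n)
    (hX : ∀ i, (X ∩ petalSeg i s).Nonempty) :
    ∃ f : Fin n → ℕ, (∀ i, f i ∈ s) ∧ petalTransversal f = X := by
  obtain ⟨g, hg, rfl⟩ := exists_image_eq_of_card_le_of_pairwise_disjoint
    (pairwise_disjoint_petalSeg s) (hcard.trans_eq (Fintype.card_fin n).symm) hX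
  choose f hf hfg using fun i => mem_petalSeg.1 (hg i)
  exact ⟨f, hf, congrArg (Finset.univ.image ·) (funext hfg)⟩

end FlowerGraph

theorem stmt_13_general {n : ℕ} (N : ℕ) (φ : List (List (SLit n))) :
    (∃ X : Finset (FVertex n),
      X.card ≤ n ∧
      (∀ x ∈ X, x = fz ∨ ∃ (i : Fin n) (j : ℕ), 1 ≤ j ∧ j ≤ N ∧ x = fv i j) ∧
      (∀ C ∈ φ, (X ∩ clauseSubgraph N C).Nonempty) ∧
      (∀ i : Fin n, (X ∩ petalSeg i (Finset.Icc 1 N)).Nonempty)) ↔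
    SSat N φ := by
  constructor
  · rintro ⟨X, hcard, -, hclause, hpetal⟩
    obtain ⟨f, hf, rfl⟩ := exists_petalTransversal_eq hcard hpetal
    exact ⟨f, fun i => Finset.mem_Icc.1 (hf i), fun C hC =>
      (petalTransversal_inter_clauseSubgraph_nonempty_iff hf).1 (hclause C hC)⟩
  · rintro ⟨f, hf, hsat⟩
    have hmem (i : Fin n) : f i ∈ Finset.Icc 1 N := Finset.mem_Icc.2 (hf i)
    refine ⟨petalTransversal f, (card_petalTransversal f).le, fun x hx => ?_,
      fun C hC => (petalTransversal_inter_clauseSubgraph_nonempty_iff hmem).2 (hsat C hC),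
      fun i => petalTransversal_inter_petalSeg_nonempty_iff.2 (hmem i)⟩
    obtain ⟨i, rfl⟩ := mem_petalTransversal.1 hx
    exact Or.inr ⟨i, f i, (hf i).1, (hf i).2, rfl⟩

/-- **Theorem: W[1]-hardness reduction.** Let `φ` be a totally
ordered regular signed 3-CNF formula over `x_1, …, x_n` with truth value set `[N]`,
with no trivially satisfied clause.  Build the flower graph `G` with core `z` and
petals `R_1, …, R_n`, each a path on `N` vertices with both endpoints adjacent to
`z`, and let the collection `S` consist of the subgraphs `S_C` (for the clauses
`C` of `φ`) and the petals `R_i`.  Then there is a set of at most `n` vertices of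
`G` intersecting every subgraph of `S` if and only if `φ` is satisfiable. -/
theorem stmt_13 {n : ℕ} (N : ℕ) (hN : 1 ≤ N) (φ : List (List (SLit n)))
    (hlen : ∀ C ∈ φ, C.length ≤ 3)
    (hrange : ∀ C ∈ φ, ∀ l ∈ C, 1 ≤ l.2.2 ∧ l.2.2 ≤ N)
    (htriv : ∀ C ∈ φ, ∀ l₁ ∈ C, ∀ l₂ ∈ C, l₁.1 = l₂.1 →
      l₁.2.1 = false → l₂.2.1 = true → ¬ l₂.2.2 ≤ l₁.2.2 + 1) :
    (∃ X : Finset (FVertex n),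
      X.card ≤ n ∧
      (∀ x ∈ X, x = fz ∨ ∃ (i : Fin n) (j : ℕ), 1 ≤ j ∧ j ≤ N ∧ x = fv i j) ∧
      (∀ C ∈ φ, (X ∩ clauseSubgraph N C).Nonempty) ∧
      (∀ i : Fin n, (X ∩ petalSeg i (Finset.Icc 1 N)).Nonempty)) ↔
    SSat N φ :=
  stmt_13_general N φ
end

section
/- Let φ be a totally ordered regular signed 3-CNF formula over variables x_1, …, x_n with truth value set [N], containing no trivially satisfied clause (i.e., no clause that contains literals x_i ≤ c_1 and x_i ≥ c_2 on the same variable with c_2 ≤ c_1 + 1). Build the graph G consisting of n vertex-disjoint paths R_1, …, R_n, each R_i a path on N vertices r_{i,1}, …, r_{i,N}, together with two additional vertices z and z' that are each adjacent to every vertex of every path R_i. Let P be the collection of simple paths in G consisting of: for each clause C of φ with literal segments Q_1, Q_2, Q_3 (where the segment of a literal x_i ≤ c is the prefix {r_{i,1}, …, r_{i,c}} of R_i and the segment of a literal x_i ≥ c is the suffix {r_{i,c}, …, r_{i,N}} of R_i), the simple path traversing Q_1, then z, then Q_2, then z', then Q_3; and, for each i ∈ [n], the path R_i. Then there is a set of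 at most n vertices of G intersecting every path in P if and only if φ is satisfiable. Moreover, {z, z'} is a feedback vertex set of G of size two. -/
/-!  The graph of the reduction: `n` vertex-disjoint paths `R_1, …, R_n`, each on
`N` vertices `r_{i,1}, …, r_{i,N}`, plus two vertices `z` and `z'` adjacent to every
vertex of every path.  Vertices are `(Fin n × ℕ) ⊕ Bool`: `Sum.inl (i, j)` (for
`1 ≤ j ≤ N`) is `r_{i,j}`, `Sum.inr false` is `z` and `Sum.inr true` is `z'`. -/

/-- Vertices of the reduction graph. -/
abbrev WVertex (n : ℕ) := (Fin n × ℕ) ⊕ Bool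

/-- The universal vertex `z`. -/
def wz {n : ℕ} : WVertex n := Sum.inr false

/-- The universal vertex `z'`. -/
def wz' {n : ℕ} : WVertex n := Sum.inr true

/-- The set of vertices of path `R_i` with indices in `s`. -/
def wSeg {n : ℕ} (i : Fin n) (s : Finset ℕ) : Finset (WVertex n) :=
  s.image (fun j => Sum.inl (i, j))

/-- The reduction graph: consecutive vertices of each path `R_i` are adjacent, and
`z`, `z'` are adjacent to every path vertex (but not to each other). -/
def redGraph (n N : ℕ) : SimpleGraph (WVertex n) :=
  SimpleGraph.fromRel (fun a b =>
    match a, b with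
    | Sum.inl (i, j), Sum.inl (i', j') => i = i' ∧ j' = j + 1 ∧ 1 ≤ j ∧ j' ≤ N
    | Sum.inl (i, j), Sum.inr _ => 1 ≤ j ∧ j ≤ N
    | Sum.inr _, _ => False)

/-- The segment of path `R_i` associated to a literal: the prefix
`{r_{i,1}, …, r_{i,c}}` for `x_i ≤ c` and the suffix `{r_{i,c}, …, r_{i,N}}`
for `x_i ≥ c`. -/
def wLitSeg {n : ℕ} (N : ℕ) (l : SLit n) : Finset (WVertex n) :=
  if l.2.1 then wSeg l.1 (Finset.Icc l.2.2 N) else wSeg l.1 (Finset.Icc 1 l.2.2)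

/-- The (vertex set of the) simple path associated to a clause `C`: it traverses the
segment of the first literal, then `z`, then the segment of the second literal, then
`z'`, then the segment of the third literal. -/
def wClausePath {n : ℕ} (N : ℕ) (C : List (SLit n)) : Finset (WVertex n) :=
  insert wz (insert wz' (C.foldr (fun l acc => wLitSeg N l ∪ acc) ∅))

/-!  Any set meeting all `n` disjoint paths `R_i` has at least `n` elements, so a hitting set of
size at most `n` contains exactly one vertex `r_{i, f i}` of each `R_i` and neither `z` nor `z'`.
Such sets correspond to assignments `f`, and `r_{i, f i}` lies on the segment of a literal on
`x_i` exactly when `f` satisfies that literal.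

`G - {z, z'}` is a forest because each of its vertices has at most one neighbor of equal or larger
position, whereas a vertex of least position on a cycle would have two. -/

section Transversal

variable {ι α : Type*} [Fintype ι] [DecidableEq α]

theorem exists_image_eq_of_pairwise_disjoint_of_card_le {A : ι → Finset α} {X : Finset α}
    (hA : Pairwise (Function.onFun Disjoint A)) (hcard : X.card ≤ Fintype.card ι)
    (hX : ∀ i, (X ∩ A i).Nonempty) :
    ∃ g : ι → α, (∀ i, g i ∈ A i) ∧ Finset.univ.image g = X := by
  choose g hg using hX
  obtain ⟨hgX, hgA⟩ := forall_and.1 fun i => Finset.mem_inter.1 (hg i)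
  have hinj : Function.Injective g := fun i j hij =>
    hA.eq (Finset.not_disjoint_iff.2 ⟨g i, hgA i, hij ▸ hgA j⟩)
  refine ⟨g, hgA, Finset.eq_of_subset_of_card_le (Finset.image_subset_iff.2 fun i _ => hgX i) ?_⟩
  rwa [Finset.card_image_of_injective _ hinj, Finset.card_univ]

end Transversal

section Forest

variable {V α : Type*} [LinearOrder α] {G : SimpleGraph V}

theorem isAcyclic_of_subsingleton_adj_and_le (f : V → α)
    (hf : ∀ u, {v | G.Adj u v ∧ f u ≤ f v}.Subsingleton) : G.IsAcyclic := by
  classical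
  intro v c hc
  obtain ⟨u, hu, hmin⟩ :=
    Set.exists_min_image {w | w ∈ c.support} f c.support.finite_toSet ⟨v, c.start_mem_support⟩
  let d := c.rotate u hu
  have hd : d.IsCycle := hc.rotate hu
  have hle (k : ℕ) : f u ≤ f (d.getVert k) :=
    hmin _ ((c.mem_support_rotate_iff u hu).1 (d.getVert_mem_support k))
  exact hd.snd_ne_penultimate <| hf u ⟨d.adj_snd hd.not_nil, hle 1⟩
    ⟨(d.adj_penultimate hd.not_nil).symm, hle (d.length - 1)⟩

end Forest

section Reduction

variable {n N : ℕ}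

theorem wz_ne_wz' : (wz : WVertex n) ≠ wz' := by
  simp [wz, wz']

theorem mem_wSeg {i : Fin n} {s : Finset ℕ} {x : WVertex n} :
    x ∈ wSeg i s ↔ ∃ j ∈ s, Sum.inl (i, j) = x :=
  Finset.mem_image

theorem inl_mem_wSeg {i k : Fin n} {j : ℕ} {s : Finset ℕ} :
    Sum.inl (k, j) ∈ wSeg i s ↔ k = i ∧ j ∈ s := by
  grind [mem_wSeg]

theorem pairwise_disjoint_wSeg (s : Fin n → Finset ℕ) :
    Pairwise (Function.onFun Disjoint fun i => wSeg i (s i)) := by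
  intro i k hik
  refine Finset.disjoint_left.2 fun x hxi hxk => hik ?_
  obtain ⟨j, -, rfl⟩ := mem_wSeg.1 hxi
  exact (inl_mem_wSeg.1 hxk).1

theorem inl_mem_wLitSeg_iff_slitSat {f : Fin n → ℕ} {i : Fin n} (hi : 1 ≤ f i ∧ f i ≤ N)
    (l : SLit n) : Sum.inl (i, f i) ∈ wLitSeg N l ↔ i = l.1 ∧ slitSat f l := by
  unfold wLitSeg slitSat
  split <;> grind [inl_mem_wSeg]

theorem mem_wClausePath {C : List (SLit n)} {x : WVertex n} :
    x ∈ wClausePath N C ↔ x = wz ∨ x = wz' ∨ ∃ l ∈ C, x ∈ wLitSeg N l := by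
  have mem_foldr : x ∈ C.foldr (fun l acc => wLitSeg N l ∪ acc) ∅ ↔ ∃ l ∈ C, x ∈ wLitSeg N l := by
    induction C with
    | nil => simp
    | cons l C ih => simp [ih]
  simp only [wClausePath, Finset.mem_insert, mem_foldr]

/-- The vertices `r_{i, f i}`, one on each path `R_i`, by which an assignment `f` is encoded as a
hitting set. -/
def assignmentVertices (f : Fin n → ℕ) : Finset (WVertex n) :=
  Finset.univ.image fun i => Sum.inl (i, f i)

theorem mem_assignmentVertices {f : Fin n → ℕ} {x : WVertex n} :
    x ∈ assignmentVertices f ↔ ∃ i, Sum.inl (i, f i) = x := by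
  simp only [assignmentVertices, Finset.mem_image, Finset.mem_univ, true_and]

theorem card_assignmentVertices_le (f : Fin n → ℕ) : (assignmentVertices f).card ≤ n :=
  Finset.card_image_le.trans_eq (Finset.card_fin n)

theorem assignmentVertices_inter_wSeg_nonempty_iff {f : Fin n → ℕ} {i : Fin n} {s : Finset ℕ} :
    (assignmentVertices f ∩ wSeg i s).Nonempty ↔ f i ∈ s := by
  simp only [Finset.Nonempty, Finset.mem_inter, mem_assignmentVertices]
  constructor
  · rintro ⟨_, ⟨k, rfl⟩, hk⟩
    obtain ⟨rfl, hmem⟩ := inl_mem_wSeg.1 hk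
    exact hmem
  · exact fun hmem => ⟨_, ⟨i, rfl⟩, inl_mem_wSeg.2 ⟨rfl, hmem⟩⟩

theorem assignmentVertices_inter_wClausePath_nonempty_iff {f : Fin n → ℕ}
    (hf : ∀ i, 1 ≤ f i ∧ f i ≤ N) (C : List (SLit n)) :
    (assignmentVertices f ∩ wClausePath N C).Nonempty ↔ ∃ l ∈ C, slitSat f l := by
  simp only [Finset.Nonempty, Finset.mem_inter, mem_assignmentVertices, mem_wClausePath]
  constructor
  · rintro ⟨_, ⟨i, rfl⟩, hz | hz' | ⟨l, hl, hseg⟩⟩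
    · exact absurd hz Sum.inl_ne_inr
    · exact absurd hz' Sum.inl_ne_inr
    · exact ⟨l, hl, ((inl_mem_wLitSeg_iff_slitSat (hf i) l).1 hseg).2⟩
  · rintro ⟨l, hl, hsat⟩
    exact ⟨_, ⟨l.1, rfl⟩,
      .inr (.inr ⟨l, hl, (inl_mem_wLitSeg_iff_slitSat (hf l.1) l).2 ⟨rfl, hsat⟩⟩)⟩

theorem exists_assignmentVertices_eq {s : Fin n → Finset ℕ} {X : Finset (WVertex n)}
    (hcard : X.card ≤ n) (hX : ∀ i, (X ∩ wSeg i (s i)).Nonempty) :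
    ∃ f : Fin n → ℕ, (∀ i, f i ∈ s i) ∧ assignmentVertices f = X := by
  obtain ⟨g, hg, rfl⟩ := exists_image_eq_of_pairwise_disjoint_of_card_le
    (pairwise_disjoint_wSeg s) (hcard.trans_eq (Fintype.card_fin n).symm) hX
  choose f hf hfg using fun i => mem_wSeg.1 (hg i)
  exact ⟨f, hf, congrArg Finset.univ.image (funext hfg)⟩

theorem redGraph_adj_inl_inl {i i' : Fin n} {j j' : ℕ} :
    (redGraph n N).Adj (Sum.inl (i, j)) (Sum.inl (i', j')) ↔
      i = i' ∧ ((j' = j + 1 ∧ 1 ≤ j ∧ j' ≤ N) ∨ (j = j' + 1 ∧ 1 ≤ j' ∧ j ≤ N)) := by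
  simp only [redGraph, SimpleGraph.fromRel_adj, ne_eq, Sum.inl.injEq, Prod.mk.injEq]
  grind

theorem exists_inl_eq_of_ne_wz_of_ne_wz' {x : WVertex n} (hz : x ≠ wz) (hz' : x ≠ wz') :
    ∃ i j, Sum.inl (i, j) = x := by
  match x with
  | .inl (i, j) => exact ⟨i, j, rfl⟩
  | .inr false => exact absurd rfl hz
  | .inr true => exact absurd rfl hz'

theorem eq_succ_of_redGraph_adj_of_le {i i' : Fin n} {j j' : ℕ}
    (hadj : (redGraph n N).Adj (Sum.inl (i, j)) (Sum.inl (i', j'))) (hle : j ≤ j') :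
    i' = i ∧ j' = j + 1 := by
  obtain ⟨rfl, hj⟩ := redGraph_adj_inl_inl.1 hadj
  exact ⟨rfl, by omega⟩

theorem redGraph_induce_isAcyclic (n N : ℕ) :
    ((redGraph n N).induce {w : WVertex n | w ≠ wz ∧ w ≠ wz'}).IsAcyclic := by
  refine isAcyclic_of_subsingleton_adj_and_le (fun w => Sum.elim Prod.snd (fun _ => 0) w.1) ?_
  rintro ⟨u, hu, hu'⟩ ⟨v, hv, hv'⟩ ⟨huv, hle_v⟩ ⟨w, hw, hw'⟩ ⟨huw, hle_w⟩
  obtain ⟨i, j, rfl⟩ := exists_inl_eq_of_ne_wz_of_ne_wz' hu hu'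
  obtain ⟨iv, jv, rfl⟩ := exists_inl_eq_of_ne_wz_of_ne_wz' hv hv'
  obtain ⟨iw, jw, rfl⟩ := exists_inl_eq_of_ne_wz_of_ne_wz' hw hw'
  obtain ⟨rfl, rfl⟩ := eq_succ_of_redGraph_adj_of_le huv hle_v
  obtain ⟨rfl, rfl⟩ := eq_succ_of_redGraph_adj_of_le huw hle_w
  rfl

theorem exists_hitting_set_iff_sSat (N : ℕ) (φ : List (List (SLit n))) :
    (∃ X : Finset (WVertex n),
      X.card ≤ n ∧
      (∀ x ∈ X, x = wz ∨ x = wz' ∨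
        ∃ (i : Fin n) (j : ℕ), 1 ≤ j ∧ j ≤ N ∧ x = Sum.inl (i, j)) ∧
      (∀ C ∈ φ, (X ∩ wClausePath N C).Nonempty) ∧
      (∀ i : Fin n, (X ∩ wSeg i (Finset.Icc 1 N)).Nonempty)) ↔
    SSat N φ := by
  constructor
  · rintro ⟨X, hcard, -, hclause, hpath⟩
    obtain ⟨f, hf, rfl⟩ := exists_assignmentVertices_eq hcard hpath
    simp only [Finset.mem_Icc] at hf
    exact ⟨f, hf, fun C hC =>
      (assignmentVertices_inter_wClausePath_nonempty_iff hf C).1 (hclause C hC)⟩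
  · rintro ⟨f, hf, hsat⟩
    refine ⟨assignmentVertices f, card_assignmentVertices_le f, fun x hx => ?_,
      fun C hC => (assignmentVertices_inter_wClausePath_nonempty_iff hf C).2 (hsat C hC),
      fun i => assignmentVertices_inter_wSeg_nonempty_iff.2 (Finset.mem_Icc.2 (hf i))⟩
    obtain ⟨i, rfl⟩ := mem_assignmentVertices.1 hx
    exact .inr (.inr ⟨i, f i, (hf i).1, (hf i).2, rfl⟩)

end Reduction

theorem stmt_14_general {n : ℕ} (N : ℕ) (φ : List (List (SLit n))) :
    ((∃ X : Finset (WVertex n),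
      X.card ≤ n ∧
      (∀ x ∈ X, x = wz ∨ x = wz' ∨
        ∃ (i : Fin n) (j : ℕ), 1 ≤ j ∧ j ≤ N ∧ x = Sum.inl (i, j)) ∧
      (∀ C ∈ φ, (X ∩ wClausePath N C).Nonempty) ∧
      (∀ i : Fin n, (X ∩ wSeg i (Finset.Icc 1 N)).Nonempty)) ↔
     SSat N φ) ∧
    ((redGraph n N).induce {w : WVertex n | w ≠ wz ∧ w ≠ wz'}).IsAcyclic ∧
    ({wz, wz'} : Finset (WVertex n)).card = 2 :=
  ⟨exists_hitting_set_iff_sSat N φ, redGraph_induce_isAcyclic n N, Finset.card_pair wz_ne_wz'⟩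

/-- **Theorem: para-NP-hardness for feedback vertex number two.**
Let `φ` be a totally ordered regular signed 3-CNF formula over `x_1, …, x_n` with
truth value set `[N]` and no trivially satisfied clause.  Build the graph `G`
consisting of `n` disjoint paths `R_1, …, R_n` on `N` vertices each plus two
vertices `z`, `z'` adjacent to all path vertices, and let `P` consist of the
clause paths (through `z` and `z'`) and the paths `R_i`.  Then there is a set of
at most `n` vertices of `G` intersecting every path of `P` if and only if `φ` is
satisfiable; moreover `{z, z'}` is a feedback vertex set of `G` of size two. -/
theorem stmt_14 {n : ℕ} (N : ℕ) (hN : 1 ≤ N) (φ : List (List (SLit n)))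
    (hlen : ∀ C ∈ φ, C.length ≤ 3)
    (hrange : ∀ C ∈ φ, ∀ l ∈ C, 1 ≤ l.2.2 ∧ l.2.2 ≤ N)
    (htriv : ∀ C ∈ φ, ∀ l₁ ∈ C, ∀ l₂ ∈ C, l₁.1 = l₂.1 →
      l₁.2.1 = false → l₂.2.1 = true → ¬ l₂.2.2 ≤ l₁.2.2 + 1) :
    ((∃ X : Finset (WVertex n),
      X.card ≤ n ∧
      (∀ x ∈ X, x = wz ∨ x = wz' ∨
        ∃ (i : Fin n) (j : ℕ), 1 ≤ j ∧ j ≤ N ∧ x = Sum.inl (i, j)) ∧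
      (∀ C ∈ φ, (X ∩ wClausePath N C).Nonempty) ∧
      (∀ i : Fin n, (X ∩ wSeg i (Finset.Icc 1 N)).Nonempty)) ↔
     SSat N φ) ∧
    ((redGraph n N).induce {w : WVertex n | w ≠ wz ∧ w ≠ wz'}).IsAcyclic ∧
    ({wz, wz'} : Finset (WVertex n)).card = 2 :=
  stmt_14_general N φ
end

section
/- Let T be a finite tree on vertex set U rooted at a leaf, and let F be a family of subsets of U such that every S ∈ F induces a subtree (a connected subgraph) of T. Let v be a vertex of maximum depth such that there is a set S ∈ F all of whose members belong to the subtree of T rooted at v. Then there is a minimum-cardinality hitting set of F (a set X ⊆ U of minimum size with X ∩ S ≠ ∅ for all S ∈ F) that contains v. -/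
/-- The subtree of the tree `G`, rooted at `r`, that is rooted at `v`: the set of
vertices `u` such that `v` lies on the (unique) `r`–`u` path, characterized by the
distance identity `dist r u = dist r v + dist v u`. -/
def subtreeAt {U : Type} (G : SimpleGraph U) (r v : U) : Set U :=
  {u : U | G.dist r u = G.dist r v + G.dist v u}

/-!
Let `X` be a minimum hitting set and `S₀ ∈ F` a set inside the subtree rooted at `v`. Some `x ∈ X`
hits `S₀`, so `x` lies below `v`, and it is enough to show that every `S ∈ F` containing `x` also
contains `v`: then `x` may be exchanged for `v` in `X`. Such an `S` lies in the subtree rooted at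
its topmost vertex `c`, so `c` is at most as deep as `v` by the choice of `v`. The walk that goes
from `r` to `c` along a geodesic and then from `c` to `x` inside `S` has to pass through `v`, and
it cannot do so strictly above `c`; hence `v ∈ S`.
-/

open Cardinal SimpleGraph

section Graph

variable {V : Type*} {G : SimpleGraph V}

theorem eq_of_isPath_of_isAcyclic (hG : G.IsAcyclic) {u w : V} {p q : G.Walk u w}
    (hp : p.IsPath) (hq : q.IsPath) : p = q :=
  congrArg Subtype.val ((hG.subsingleton_path u w).elim ⟨p, hp⟩ ⟨q, hq⟩)

theorem length_eq_dist_of_isAcyclic (hG : G.IsAcyclic) {u w : V} {p : G.Walk u w}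
    (hp : p.IsPath) : p.length = G.dist u w := by
  obtain ⟨q, hq, hq_length⟩ := p.reachable.exists_path_of_dist
  rwa [eq_of_isPath_of_isAcyclic hG hp hq]

theorem support_subset_support_of_isAcyclic (hG : G.IsAcyclic) {u w : V} {p : G.Walk u w}
    (hp : p.IsPath) (q : G.Walk u w) : p.support ⊆ q.support := by
  classical
  rw [eq_of_isPath_of_isAcyclic hG hp q.bypass_isPath]
  exact q.support_bypass_subset_support

theorem exists_isPath_support_subset {S : Set V} (hS : (G.induce S).Preconnected) {a b : V}
    (ha : a ∈ S) (hb : b ∈ S) : ∃ p : G.Walk a b, p.IsPath ∧ ∀ z ∈ p.support, z ∈ S := by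
  obtain ⟨p, hp⟩ := (hS ⟨a, ha⟩ ⟨b, hb⟩).exists_isPath
  refine ⟨p.map (Embedding.induce S).toHom,
    hp.map (Embedding.induce (G := G) S).injective, fun z hz => ?_⟩
  obtain ⟨y, -, rfl⟩ := List.mem_map.1 (p.support_map (Embedding.induce S).toHom ▸ hz)
  exact y.2

theorem isPath_append {u v w : V} {p : G.Walk u v} {q : G.Walk v w} (hp : p.IsPath)
    (hq : q.IsPath) (h : ∀ z ∈ p.support, z ∈ q.support → z = v) : (p.append q).IsPath := by
  have hq_nodup : (v :: q.support.tail).Nodup := q.cons_tail_support ▸ hq.support_nodup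
  rw [Walk.isPath_def, Walk.support_append, List.nodup_append']
  refine ⟨hp.support_nodup, hq_nodup.of_cons, fun z hzp hzq => ?_⟩
  obtain rfl := h z hzp (List.mem_of_mem_tail hzq)
  exact (List.nodup_cons.1 hq_nodup).1 hzq

theorem eq_of_mem_support_of_dist_le {u w z : V} {p : G.Walk u w} (hp : p.length = G.dist u w)
    (hz : z ∈ p.support) (hle : G.dist u w ≤ G.dist u z) : z = w := by
  obtain ⟨p₁, p₂, rfl⟩ := Walk.mem_support_iff_exists_append.1 hz
  have hp₁ : G.dist u z ≤ p₁.length := dist_le p₁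
  rw [Walk.length_append] at hp
  exact Walk.eq_of_length_eq_zero (p := p₂) (by omega)

end Graph

section Tree

variable {U : Type} {G : SimpleGraph U} {r v x : U} {S : Set U}

theorem mem_support_of_mem_subtreeAt (hT : G.IsTree) (hx : x ∈ subtreeAt G r v)
    (q : G.Walk r x) : v ∈ q.support := by
  obtain ⟨p₁, hp₁⟩ := hT.connected.exists_walk_length_eq_dist r v
  obtain ⟨p₂, hp₂⟩ := hT.connected.exists_walk_length_eq_dist v x
  have h_length : (p₁.append p₂).length = G.dist r x := by
    rw [Walk.length_append, hp₁, hp₂, hx]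
  have h_path : (p₁.append p₂).IsPath := Walk.isPath_of_length_eq_dist _ h_length
  exact support_subset_support_of_isAcyclic hT.isAcyclic h_path q
    ((p₁.mem_support_append_iff p₂).2 (.inl p₁.end_mem_support))

theorem subset_subtreeAt_of_forall_dist_le (hT : G.IsTree) (hS : (G.induce S).Preconnected)
    {c : U} (hc : c ∈ S) (hc_min : ∀ y ∈ S, G.dist r c ≤ G.dist r y) :
    S ⊆ subtreeAt G r c := by
  intro y hy
  obtain ⟨p, hp, hp_length⟩ := hT.connected.exists_path_of_dist r c
  obtain ⟨q, hq, hqS⟩ := exists_isPath_support_subset hS hc hy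
  have h_path : (p.append q).IsPath := isPath_append hp hq fun z hzp hzq =>
    eq_of_mem_support_of_dist_le hp_length hzp (hc_min z (hqS z hzq))
  change G.dist r y = G.dist r c + G.dist c y
  rw [← length_eq_dist_of_isAcyclic hT.isAcyclic h_path, Walk.length_append, hp_length,
    length_eq_dist_of_isAcyclic hT.isAcyclic hq]

theorem exists_mem_subset_subtreeAt (hT : G.IsTree) (hS : (G.induce S).Connected) (r : U) :
    ∃ c ∈ S, S ⊆ subtreeAt G r c := by
  obtain ⟨c, hc, hc_min⟩ := exists_minimalFor_of_wellFoundedLT (· ∈ S) (G.dist r)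
    (Set.nonempty_coe_sort.1 hS.nonempty)
  exact ⟨c, hc, subset_subtreeAt_of_forall_dist_le hT hS.preconnected hc fun y hy =>
    (le_total (G.dist r c) (G.dist r y)).elim id (hc_min hy)⟩

theorem mem_of_mem_subtreeAt_of_dist_le (hT : G.IsTree) (hS : (G.induce S).Preconnected)
    (hxS : x ∈ S) (hx : x ∈ subtreeAt G r v) {c : U} (hc : c ∈ S)
    (hcv : G.dist r c ≤ G.dist r v) : v ∈ S := by
  obtain ⟨p, hp⟩ := hT.connected.exists_walk_length_eq_dist r c
  obtain ⟨q, -, hqS⟩ := exists_isPath_support_subset hS hc hxS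
  have hv : v ∈ (p.append q).support := mem_support_of_mem_subtreeAt hT hx _
  rcases (p.mem_support_append_iff q).1 hv with hvp | hvq
  · rwa [eq_of_mem_support_of_dist_le hp hvp hcv]
  · exact hqS v hvq

end Tree

theorem exists_hitting_set_mem_of_forall_mem {α : Type*} {F : Set (Set α)} {X : Set α} {x v : α}
    (hX : ∀ S ∈ F, (X ∩ S).Nonempty) (hx : x ∈ X) (hxv : ∀ S ∈ F, x ∈ S → v ∈ S) :
    ∃ Y : Set α, v ∈ Y ∧ (∀ S ∈ F, (Y ∩ S).Nonempty) ∧ #Y ≤ #X := by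
  classical
  refine ⟨Function.update id x v '' X, ⟨x, hx, Function.update_self ..⟩, fun S hS => ?_,
    mk_image_le⟩
  obtain ⟨y, hyX, hyS⟩ := hX S hS
  refine ⟨Function.update id x v y, Set.mem_image_of_mem _ hyX, ?_⟩
  by_cases hyx : y = x
  · subst hyx
    simpa using hxv S hS hyS
  · simpa [hyx] using hyS

theorem exists_minimum_hitting_set {α : Type*} {F : Set (Set α)} (hF : ∀ S ∈ F, S.Nonempty) :
    ∃ X : Set α, (∀ S ∈ F, (X ∩ S).Nonempty) ∧
      ∀ Y : Set α, (∀ S ∈ F, (Y ∩ S).Nonempty) → #X ≤ #Y := by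
  obtain ⟨X, hX, hX_min⟩ := exists_minimalFor_of_wellFoundedLT
    (fun X : Set α => ∀ S ∈ F, (X ∩ S).Nonempty) (fun X => #X)
    ⟨Set.univ, fun S hS => (Set.univ_inter S).symm ▸ hF S hS⟩
  exact ⟨X, hX, fun Y hY => (le_total #X #Y).elim id (hX_min hY)⟩

theorem stmt_16_general {U : Type} {G : SimpleGraph U} (hT : G.IsTree) {r : U}
    {F : Set (Set U)} (hF : ∀ S ∈ F, (G.induce S).Connected) {v : U}
    (hv : ∃ S ∈ F, S ⊆ subtreeAt G r v)
    (hmax : ∀ w : U, (∃ S ∈ F, S ⊆ subtreeAt G r w) → G.dist r w ≤ G.dist r v) :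
    ∃ X : Set U, v ∈ X ∧ (∀ S ∈ F, (X ∩ S).Nonempty) ∧
      ∀ Y : Set U, (∀ S ∈ F, (Y ∩ S).Nonempty) → #X ≤ #Y := by
  obtain ⟨S₀, hS₀, hS₀v⟩ := hv
  obtain ⟨X, hX, hX_min⟩ := exists_minimum_hitting_set fun S hS =>
    Set.nonempty_coe_sort.1 (hF S hS).nonempty
  obtain ⟨x, hxX, hxS₀⟩ := hX S₀ hS₀
  have hxv : ∀ S ∈ F, x ∈ S → v ∈ S := by
    intro S hS hxS
    obtain ⟨c, hcS, hSc⟩ := exists_mem_subset_subtreeAt hT (hF S hS) r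
    exact mem_of_mem_subtreeAt_of_dist_le hT (hF S hS).preconnected hxS (hS₀v hxS₀) hcS
      (hmax c ⟨S, hS, hSc⟩)
  obtain ⟨Y, hvY, hY, hYX⟩ := exists_hitting_set_mem_of_forall_mem hX hxX hxv
  exact ⟨Y, hvY, hY, fun Z hZ => hYX.trans (hX_min Z hZ)⟩

/-- **folklore greedy step for hypertrees.** Let `T` be a finite tree
on vertex set `U` rooted at a leaf `r`, and let `F` be a family of subsets of `U`
each of which induces a subtree (a connected subgraph) of `T`.  Let `v` be a vertex
of maximum depth (distance from `r`) such that some `S ∈ F` lies entirely in the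
subtree rooted at `v`.  Then there is a minimum-cardinality hitting set of `F`
containing `v`. -/
theorem stmt_16 {U : Type} [Fintype U] [DecidableEq U] (G : SimpleGraph U)
    [DecidableRel G.Adj] (hT : G.IsTree) (r : U) (hr : G.degree r ≤ 1)
    (F : Set (Finset U)) (hF : ∀ S ∈ F, (G.induce (↑S : Set U)).Connected)
    (v : U)
    (hv : ∃ S ∈ F, (↑S : Set U) ⊆ subtreeAt G r v)
    (hmax : ∀ w : U, (∃ S ∈ F, (↑S : Set U) ⊆ subtreeAt G r w) →
      G.dist r w ≤ G.dist r v) :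
    ∃ X : Finset U, v ∈ X ∧ (∀ S ∈ F, (X ∩ S).Nonempty) ∧
      ∀ Y : Finset U, (∀ S ∈ F, (Y ∩ S).Nonempty) → X.card ≤ Y.card := by
  obtain ⟨X, hvX, hX, hX_min⟩ := stmt_16_general (F := (↑) '' F) hT (by simpa using hF)
    (by simpa using hv) (by simpa using hmax)
  lift X to Finset U using X.toFinite
  refine ⟨X, hvX, fun S hS => ?_, fun Y hY => ?_⟩
  · exact_mod_cast hX S ⟨S, hS, rfl⟩
  · simpa using hX_min Y (Set.forall_mem_image.2 fun S hS => by exact_mod_cast hY S hS)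
end

section
/- Let G be a connected finite simple graph of minimum degree at least two, let S be the nonempty set of vertices of G of degree at least three, let P be a set of simple paths in G, let S' be a proper subset of S, and let b assign a nonnegative integer to every connected component of G − S. Let (G*, z, P*) be the result of the construction that deletes S', removes paths hit by S', removes paths fully containing a positive-budget component, deletes zero-budget components from the graph and from all paths, and identifies S ∖ S' into the core z; number the petals of the flower G* as R_1, …, R_n, and let b*(i) = b(C_i) where C_i is the component of G − S corresponding to petal R_i. Then the following are equivalent: (1) there is a set X of vertices of G intersecting every path in P such that X ∩ S = S' and |X ∩ V(C)| = b(C) for every connected component C of G − S; (2) the instance (G*, z, P*, b*) of Hitting Paths in a Flower has a solution. -/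
/-!  The reduction from `Hitting Paths in a Graph` to `Hitting Paths in a Flower`.

`G` is a connected finite simple graph of minimum degree at least two, `S` is the
(nonempty) set of its vertices of degree at least three, `S' ⊊ S` is the guessed
set of solution vertices inside `S`, and `b` assigns a budget to every connected
component of `G − S`.  The construction deletes `S'` (and the paths it hits),
removes the paths fully containing a positive-budget component, deletes the
zero-budget components (from the graph and from the paths), and identifies
`S ∖ S'` into a single core vertex `z`.

The vertex set of the resulting graph `G*` is `Option {v // KeepV G b v}`:
`none` is the core `z` and `some u` represents the surviving vertex `u` of `G`
(a vertex outside `S` lying in a component of `G − S` of positive budget).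
Since hitting a path only depends on its vertex set, the transformed collection
`P*` is recorded by vertex sets. -/

/-- The complement of `S`: vertices of degree less than three. -/
def lowSet {V : Type} [Fintype V] (G : SimpleGraph V) [DecidableRel G.Adj] : Set V :=
  {v : V | G.degree v < 3}

/-- The set of vertices of `G` lying in the connected component `C` of the induced
subgraph of `G` on `s`. -/
def inducedCompSet {V : Type} (G : SimpleGraph V) (s : Set V)
    (C : (G.induce s).ConnectedComponent) : Set V :=
  {v : V | ∃ h : v ∈ s, (G.induce s).connectedComponentMk ⟨v, h⟩ = C}

/-- The vertices surviving the construction: vertices outside `S` whose component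
in `G − S` has positive budget. -/
def KeepV {V : Type} [Fintype V] (G : SimpleGraph V) [DecidableRel G.Adj]
    (b : (G.induce (lowSet G)).ConnectedComponent → ℕ) (v : V) : Prop :=
  ∃ h : v ∈ lowSet G, 0 < b ((G.induce (lowSet G)).connectedComponentMk ⟨v, h⟩)

/-- The graph `G*` produced by the construction: kept vertices retain their
adjacencies, and the core `z = none` (the identification of `S ∖ S'`) is adjacent
to the kept vertices having a `G`-neighbor in `S ∖ S'`. -/
def Gstar {V : Type} [Fintype V] (G : SimpleGraph V) [DecidableRel G.Adj]
    (b : (G.induce (lowSet G)).ConnectedComponent → ℕ) (S' : Set V) :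
    SimpleGraph (Option {v : V // KeepV G b v}) :=
  SimpleGraph.fromRel (fun a c =>
    match a, c with
    | some u, some w => G.Adj u.1 w.1
    | some u, none => ∃ s : V, 3 ≤ G.degree s ∧ s ∉ S' ∧ G.Adj u.1 s
    | none, _ => False)

/-- The vertex set of a path of `P` (a walk packaged with its endpoints). -/
def walkSupp {V : Type} (G : SimpleGraph V) (p : Σ u v : V, G.Walk u v) : Set V :=
  {x : V | x ∈ p.2.2.support}

/-- A path is removed by Step 1 (it contains a vertex of `S'`) or by Step 2 (it
contains all vertices of some component of `G − S` of positive budget). -/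
def droppedPath {V : Type} [Fintype V] (G : SimpleGraph V) [DecidableRel G.Adj]
    (b : (G.induce (lowSet G)).ConnectedComponent → ℕ) (S' : Set V)
    (p : Σ u v : V, G.Walk u v) : Prop :=
  (∃ x ∈ walkSupp G p, x ∈ S') ∨
  (∃ C : (G.induce (lowSet G)).ConnectedComponent,
    0 < b C ∧ inducedCompSet G (lowSet G) C ⊆ walkSupp G p)

/-- Steps 3 and 4 applied to the vertex set `A` of a surviving path: keep the
surviving (kept) vertices of `A`, and replace the vertices of `A` in `S ∖ S'`
(collectively) by the core `z = none`. -/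
def transformSet {V : Type} [Fintype V] (G : SimpleGraph V) [DecidableRel G.Adj]
    (b : (G.induce (lowSet G)).ConnectedComponent → ℕ) (S' : Set V) (A : Set V) :
    Set (Option {v : V // KeepV G b v}) :=
  {w : Option {v : V // KeepV G b v} |
    (∃ u : {v : V // KeepV G b v}, w = some u ∧ u.1 ∈ A) ∨
    (w = none ∧ ∃ x ∈ A, 3 ≤ G.degree x ∧ x ∉ S')}

/-- The collection `P*` of transformed subgraphs (as vertex sets). -/
def Pstar {V : Type} [Fintype V] (G : SimpleGraph V) [DecidableRel G.Adj]
    (b : (G.induce (lowSet G)).ConnectedComponent → ℕ) (S' : Set V)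
    (P : Set (Σ u v : V, G.Walk u v)) :
    Set (Set (Option {v : V // KeepV G b v})) :=
  {B | ∃ p ∈ P, ¬ droppedPath G b S' p ∧ B = transformSet G b S' (walkSupp G p)}

/-- `H` is a flower graph with core `z`: every connected component of `H − z` is a
path — it carries a Hamiltonian simple path of the component — no interior vertex
of which is adjacent to `z`. -/
def IsFlowerWithCore {X : Type} (H : SimpleGraph X) (z : X) : Prop :=
  ∀ C : (H.induce {x : X | x ≠ z}).ConnectedComponent,
    ∃ (a b : {x : X | x ≠ z}) (w : (H.induce {x : X | x ≠ z}).Walk a b),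
      w.IsPath ∧
      (∀ x : {x : X | x ≠ z},
        ((H.induce {x : X | x ≠ z}).connectedComponentMk x = C ↔ x ∈ w.support)) ∧
      (∀ x : {x : X | x ≠ z}, x ∈ w.support → x ≠ a → x ≠ b → ¬ H.Adj z x.1)

/-!
Every solution `X` in `G` satisfies `S' ⊆ X ⊆ S' ∪ {kept vertices}`: outside `S` it can only
use components of positive budget. Sets in this interval correspond, by forgetting `S'`, to the
sets of vertices of `G*` avoiding the core, and this correspondence preserves intersections with
surviving paths and cardinalities on petals. The paths that were dropped need no attention: they
contain either a vertex of `S' ⊆ X` or a whole component in which `X` must spend positive budget.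
-/

section KeptTrace

variable {α : Type*} {p : α → Prop}

/-- The trace of `A` on the elements satisfying `p`, viewed in the type where a core `none` has
been adjoined to them. With `p = KeepV G b`, this sends a set of vertices of `G` to a set of
vertices of `G* - z`, and a component of `G - S` to its petal. -/
def keptTrace (p : α → Prop) (A : Set α) : Set (Option {a // p a}) :=
  {w | ∃ u : {a // p a}, w = some u ∧ u.1 ∈ A}

theorem none_notMem_keptTrace (A : Set α) : none ∉ keptTrace p A := by
  rintro ⟨_, h, -⟩
  cases h

theorem some_mem_keptTrace {A : Set α} {u : {a // p a}} : some u ∈ keptTrace p A ↔ u.1 ∈ A := by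
  simp only [keptTrace, Set.mem_ofPred_eq, Option.some.injEq, exists_eq_left']

theorem keptTrace_eq_image (A : Set α) : keptTrace p A = some '' (Subtype.val ⁻¹' A) := by
  ext (_ | u)
  · simp [none_notMem_keptTrace]
  · simp [some_mem_keptTrace]

theorem keptTrace_inter (A B : Set α) :
    keptTrace p A ∩ keptTrace p B = keptTrace p (A ∩ B) := by
  simp only [keptTrace_eq_image, Set.preimage_inter,
    Set.image_inter (Option.some_injective {a // p a})]

theorem keptTrace_nonempty {A : Set α} : (keptTrace p A).Nonempty ↔ ∃ a ∈ A, p a := by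
  rw [keptTrace_eq_image, Set.image_nonempty]
  exact ⟨fun ⟨u, hu⟩ => ⟨u, hu, u.2⟩, fun ⟨a, ha, hp⟩ => ⟨⟨a, hp⟩, ha⟩⟩

theorem ncard_keptTrace {A : Set α} (hA : A ⊆ {a | p a}) : (keptTrace p A).ncard = A.ncard := by
  rw [keptTrace_eq_image, Set.ncard_image_of_injective _ (Option.some_injective _),
    Set.ncard_preimage_of_injective_subset_range Subtype.val_injective]
  exact fun a ha => ⟨⟨a, hA ha⟩, rfl⟩

theorem exists_keptTrace_eq {T : Set α} (hT : ∀ a ∈ T, ¬ p a) {Y : Set (Option {a // p a})}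
    (hY : none ∉ Y) : ∃ X, T ⊆ X ∧ X ⊆ T ∪ {a | p a} ∧ keptTrace p X = Y := by
  refine ⟨T ∪ Subtype.val '' (some ⁻¹' Y), Set.subset_union_left,
    Set.union_subset_union_right T ?_, ?_⟩
  · rintro _ ⟨u, -, rfl⟩
    exact u.2
  · ext (_ | u)
    · exact iff_of_false (none_notMem_keptTrace _) hY
    · have hu : u.1 ∉ T := fun h => hT u.1 h u.2
      rw [some_mem_keptTrace, Set.mem_union, or_iff_right hu,
        Subtype.val_injective.mem_set_image, Set.mem_preimage]

end KeptTrace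

section Reduction

variable {V : Type} [Fintype V] {G : SimpleGraph V} [DecidableRel G.Adj]
  {b : (G.induce (lowSet G)).ConnectedComponent → ℕ} {S' X : Set V}

theorem notMem_lowSet {v : V} : v ∉ lowSet G ↔ 3 ≤ G.degree v := by
  rw [lowSet, Set.mem_ofPred_eq, not_lt]

theorem keepV_iff_of_mem_inducedCompSet {C : (G.induce (lowSet G)).ConnectedComponent} {v : V}
    (hv : v ∈ inducedCompSet G (lowSet G) C) : KeepV G b v ↔ 0 < b C := by
  obtain ⟨hlow, rfl⟩ := hv
  exact exists_prop_of_true hlow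

theorem not_keepV_of_three_le_degree {v : V} (hv : 3 ≤ G.degree v) : ¬ KeepV G b v :=
  fun ⟨hlow, _⟩ => notMem_lowSet.2 hv hlow

theorem subset_union_keepV_of_ncard_eq (hXS : X ∩ {v | 3 ≤ G.degree v} ⊆ S')
    (hcard : ∀ C, (X ∩ inducedCompSet G (lowSet G) C).ncard = b C) :
    X ⊆ S' ∪ {v | KeepV G b v} := by
  intro x hx
  by_cases hlow : x ∈ lowSet G
  · refine Or.inr ⟨hlow, ?_⟩
    rw [← hcard, Set.ncard_pos]
    exact ⟨x, hx, hlow, rfl⟩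
  · exact Or.inl (hXS ⟨hx, notMem_lowSet.1 hlow⟩)

theorem inter_three_le_degree_eq (hS' : S' ⊆ {v | 3 ≤ G.degree v}) (hS'X : S' ⊆ X)
    (hX : X ⊆ S' ∪ {v | KeepV G b v}) : X ∩ {v | 3 ≤ G.degree v} = S' :=
  Set.Subset.antisymm
    (fun _ ⟨hx, hdeg⟩ => (hX hx).resolve_right (not_keepV_of_three_le_degree hdeg))
    (Set.subset_inter hS'X hS')

theorem inter_inducedCompSet_eq_empty (hS' : S' ⊆ {v | 3 ≤ G.degree v})
    (hX : X ⊆ S' ∪ {v | KeepV G b v}) {C : (G.induce (lowSet G)).ConnectedComponent}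
    (hC : b C = 0) : X ∩ inducedCompSet G (lowSet G) C = ∅ := by
  refine Set.eq_empty_of_forall_notMem fun x ⟨hx, hxC⟩ => ?_
  rcases hX hx with hxS' | hkeep
  · exact notMem_lowSet.2 (hS' hxS') hxC.1
  · exact ((keepV_iff_of_mem_inducedCompSet hxC).1 hkeep).ne' hC

theorem inter_three_le_degree_eq_and_ncard_eq_iff (hS' : S' ⊆ {v | 3 ≤ G.degree v}) :
    (X ∩ {v | 3 ≤ G.degree v} = S' ∧
        ∀ C, (X ∩ inducedCompSet G (lowSet G) C).ncard = b C) ↔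
      S' ⊆ X ∧ X ⊆ S' ∪ {v | KeepV G b v} ∧
        ∀ C, 0 < b C → (X ∩ inducedCompSet G (lowSet G) C).ncard = b C := by
  constructor
  · rintro ⟨hXS, hcard⟩
    exact ⟨hXS ▸ Set.inter_subset_left, subset_union_keepV_of_ncard_eq hXS.subset hcard,
      fun C _ => hcard C⟩
  · rintro ⟨hS'X, hX, hcard⟩
    refine ⟨inter_three_le_degree_eq hS' hS'X hX, fun C => ?_⟩
    rcases (b C).eq_zero_or_pos with hC | hC
    · rw [inter_inducedCompSet_eq_empty hS' hX hC, Set.ncard_empty, hC]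
    · exact hcard C hC

theorem ncard_keptTrace_inter_petal {C : (G.induce (lowSet G)).ConnectedComponent}
    (hC : 0 < b C) (X : Set V) :
    (keptTrace (KeepV G b) X ∩ keptTrace (KeepV G b) (inducedCompSet G (lowSet G) C)).ncard =
      (X ∩ inducedCompSet G (lowSet G) C).ncard := by
  rw [keptTrace_inter]
  exact ncard_keptTrace fun _ hv => (keepV_iff_of_mem_inducedCompSet hv.2).2 hC

theorem keptTrace_inter_transformSet (X S' A : Set V) :
    keptTrace (KeepV G b) X ∩ transformSet G b S' A = keptTrace (KeepV G b) (X ∩ A) := by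
  ext (_ | u)
  · simp [none_notMem_keptTrace]
  · simp [some_mem_keptTrace, transformSet]

theorem keptTrace_inter_transformSet_nonempty (hX : X ⊆ S' ∪ {v | KeepV G b v}) {A : Set V}
    (hA : Disjoint A S') :
    (keptTrace (KeepV G b) X ∩ transformSet G b S' A).Nonempty ↔ (X ∩ A).Nonempty := by
  rw [keptTrace_inter_transformSet, keptTrace_nonempty]
  constructor
  · rintro ⟨x, hx, -⟩
    exact ⟨x, hx⟩
  · rintro ⟨x, hxX, hxA⟩
    exact ⟨x, ⟨hxX, hxA⟩, (hX hxX).resolve_left (hA.notMem_of_mem_left hxA)⟩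

theorem inter_walkSupp_nonempty_of_droppedPath (hS'X : S' ⊆ X)
    (hpos : ∀ C, 0 < b C → (X ∩ inducedCompSet G (lowSet G) C).Nonempty)
    {p : Σ u v : V, G.Walk u v} (hp : droppedPath G b S' p) : (X ∩ walkSupp G p).Nonempty := by
  rcases hp with ⟨x, hxp, hxS'⟩ | ⟨C, hC, hCp⟩
  · exact ⟨x, hS'X hxS', hxp⟩
  · exact (hpos C hC).mono (Set.inter_subset_inter_right X hCp)

theorem forall_inter_walkSupp_nonempty_iff (hS'X : S' ⊆ X) (hX : X ⊆ S' ∪ {v | KeepV G b v})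
    (hpos : ∀ C, 0 < b C → (X ∩ inducedCompSet G (lowSet G) C).Nonempty)
    (P : Set (Σ u v : V, G.Walk u v)) :
    (∀ p ∈ P, (X ∩ walkSupp G p).Nonempty) ↔
      ∀ B ∈ Pstar G b S' P, (keptTrace (KeepV G b) X ∩ B).Nonempty := by
  have transfer {p : Σ u v : V, G.Walk u v} (hp : ¬ droppedPath G b S' p) :=
    keptTrace_inter_transformSet_nonempty hX
      (Set.disjoint_left.2 fun x hxp hxS' => hp (Or.inl ⟨x, hxp, hxS'⟩))
  constructor
  · rintro hhit _ ⟨p, hpP, hp, rfl⟩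
    exact (transfer hp).2 (hhit p hpP)
  · intro hhit p hpP
    by_cases hp : droppedPath G b S' p
    · exact inter_walkSupp_nonempty_of_droppedPath hS'X hpos hp
    · exact (transfer hp).1 (hhit _ ⟨p, hpP, hp, rfl⟩)

theorem hits_and_ncard_eq_iff_keptTrace (hS'X : S' ⊆ X) (hX : X ⊆ S' ∪ {v | KeepV G b v})
    (P : Set (Σ u v : V, G.Walk u v)) :
    ((∀ p ∈ P, (X ∩ walkSupp G p).Nonempty) ∧
        ∀ C, 0 < b C → (X ∩ inducedCompSet G (lowSet G) C).ncard = b C) ↔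
      (∀ B ∈ Pstar G b S' P, (keptTrace (KeepV G b) X ∩ B).Nonempty) ∧
        ∀ C, 0 < b C → (keptTrace (KeepV G b) X ∩
          keptTrace (KeepV G b) (inducedCompSet G (lowSet G) C)).ncard = b C := by
  have hbudget : (∀ C, 0 < b C → (X ∩ inducedCompSet G (lowSet G) C).ncard = b C) ↔
      ∀ C, 0 < b C → (keptTrace (KeepV G b) X ∩
        keptTrace (KeepV G b) (inducedCompSet G (lowSet G) C)).ncard = b C :=
    forall₂_congr fun C hC => by rw [ncard_keptTrace_inter_petal hC]
  rw [← hbudget]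
  refine and_congr_left fun hcard => forall_inter_walkSupp_nonempty_iff hS'X hX ?_ P
  exact fun C hC => Set.nonempty_of_ncard_ne_zero ((hcard C hC).trans_ne hC.ne')

end Reduction

theorem stmt_19_general {V : Type} [Fintype V] (G : SimpleGraph V) [DecidableRel G.Adj]
    (P : Set (Σ u v : V, G.Walk u v)) (S' : Set V) (hS' : S' ⊆ {v : V | 3 ≤ G.degree v})
    (b : (G.induce (lowSet G)).ConnectedComponent → ℕ) :
    (∃ X : Finset V,
      (∀ p ∈ P, ∃ x ∈ X, x ∈ p.2.2.support) ∧
      (↑X ∩ {v : V | 3 ≤ G.degree v} : Set V) = S' ∧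
      (∀ C : (G.induce (lowSet G)).ConnectedComponent,
        ((↑X : Set V) ∩ inducedCompSet G (lowSet G) C).ncard = b C)) ↔
    (∃ Y : Finset (Option {v : V // KeepV G b v}),
      none ∉ Y ∧
      (∀ B ∈ Pstar G b S' P, ∃ y ∈ Y, (y : Option {v : V // KeepV G b v}) ∈ B) ∧
      (∀ C : (G.induce (lowSet G)).ConnectedComponent, 0 < b C →
        ((↑Y : Set (Option {v : V // KeepV G b v})) ∩
          {w : Option {v : V // KeepV G b v} |
            ∃ u : {v : V // KeepV G b v}, w = some u ∧
              u.1 ∈ inducedCompSet G (lowSet G) C}).ncard = b C)) := by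
  constructor
  · rintro ⟨X, hhit, hX⟩
    obtain ⟨hS'X, hXkeep, hcard⟩ := (inter_three_le_degree_eq_and_ncard_eq_iff hS').1 hX
    obtain ⟨Y, hY⟩ := (keptTrace (KeepV G b) (X : Set V)).toFinite.exists_finset_coe
    have hsol := (hits_and_ncard_eq_iff_keptTrace hS'X hXkeep P).1 ⟨hhit, hcard⟩
    have hnone := none_notMem_keptTrace (p := KeepV G b) (X : Set V)
    rw [← hY] at hsol hnone
    exact ⟨Y, hnone, hsol⟩
  · rintro ⟨Y, hnone, hsol⟩
    obtain ⟨X, hS'X, hXkeep, hXY⟩ := exists_keptTrace_eq (p := KeepV G b) (Y := (Y : Set _))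
      (fun v hv => not_keepV_of_three_le_degree (hS' hv)) hnone
    lift X to Finset V using X.toFinite
    obtain ⟨hhit, hcard⟩ :=
      (hits_and_ncard_eq_iff_keptTrace hS'X hXkeep P).2 (hXY.symm ▸ hsol)
    exact ⟨X, hhit, (inter_three_le_degree_eq_and_ncard_eq_iff hS').2 ⟨hS'X, hXkeep, hcard⟩⟩

/-- **Claim 2 of Theorem `pathsingraph:fpt`.** Let `G` be a connected
finite simple graph of minimum degree at least two, `S` its nonempty set of vertices
of degree at least three, `P` a set of simple paths in `G`, `S' ⊊ S`, and `b` a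
budget function on the components of `G − S`.  The following are equivalent:
(1) there is a set `X` of vertices of `G` intersecting every path of `P` with
`X ∩ S = S'` and `|X ∩ V(C)| = b(C)` for every component `C` of `G − S`;
(2) the produced instance `(G*, z, P*, b*)` of Hitting Paths in a Flower has a
solution, i.e. a set `Y` of vertices of `G*` avoiding the core `z`, intersecting
every path of `P*`, and containing exactly `b(C)` vertices on the petal
corresponding to each positive-budget component `C` of `G − S`. -/
theorem stmt_19 {V : Type} [Fintype V] [DecidableEq V] (G : SimpleGraph V)
    [DecidableRel G.Adj] (hconn : G.Connected) (hdeg : ∀ v : V, 2 ≤ G.degree v)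
    (hS : {v : V | 3 ≤ G.degree v}.Nonempty)
    (P : Set (Σ u v : V, G.Walk u v)) (hP : ∀ p ∈ P, p.2.2.IsPath)
    (S' : Set V) (hS' : S' ⊆ {v : V | 3 ≤ G.degree v})
    (hproper : S' ≠ {v : V | 3 ≤ G.degree v})
    (b : (G.induce (lowSet G)).ConnectedComponent → ℕ) :
    (∃ X : Finset V,
      (∀ p ∈ P, ∃ x ∈ X, x ∈ p.2.2.support) ∧
      (↑X ∩ {v : V | 3 ≤ G.degree v} : Set V) = S' ∧
      (∀ C : (G.induce (lowSet G)).ConnectedComponent,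
        ((↑X : Set V) ∩ inducedCompSet G (lowSet G) C).ncard = b C)) ↔
    (∃ Y : Finset (Option {v : V // KeepV G b v}),
      none ∉ Y ∧
      (∀ B ∈ Pstar G b S' P, ∃ y ∈ Y, (y : Option {v : V // KeepV G b v}) ∈ B) ∧
      (∀ C : (G.induce (lowSet G)).ConnectedComponent, 0 < b C →
        ((↑Y : Set (Option {v : V // KeepV G b v})) ∩
          {w : Option {v : V // KeepV G b v} |
            ∃ u : {v : V // KeepV G b v}, w = some u ∧
              u.1 ∈ inducedCompSet G (lowSet G) C}).ncard = b C)) :=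
  stmt_19_general G P S' hS' b
end
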